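/- arXiv:1504.07506 — 5 statements merged into one kernel-verified Lean document; each statement's English description precedes it below -/
import Mathlib

section
/- Let P be a finite partially ordered set of cardinality n ≥ 2 that is order-isomorphic to a cartesian product of chains P₁, P₂, …, P_t (with the componentwise order), where P_i is a chain of cardinality k_i. Then every antichain of P has cardinality at most (n/2^K)·binom(K, ⌊K/2⌋), where K = Σ_{i=1}^{t} (k_i − 1). -/
/-!
The width of a product of chains with `m₁ + 1, …, m_t + 1` elements is the middle coefficient of
its rank generating polynomial `∏ (1 + X + ⋯ + X ^ mᵢ)` (de Bruijn, Tengbergen, Kruyswijk): the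
product of two chains peels into hooks, which mirrors the Clebsch–Gordan identity
`[m + 1] [n + 1] = [m + n + 1] + X [m] [n]` for `[n] = 1 + X + ⋯ + X ^ (n - 1)`.

It remains to see that replacing a factor `[m + 1]` by `(1 + X) ^ m` does not decrease the middle
coefficient divided by the value at `1`. The cofactor is symmetric and unimodal, hence a sum of
terms `X ^ j [n]`, and for such a term the middle coefficient of its product with `[m]` is
`min m n`. As `min m n / m` decreases in `m`, averaging `[m + 2]` with `X [m]`, which is what
`[2] [m + 1] = [m + 2] + X [m]` does, increases the normalised middle coefficient.
-/

open Finset Polynomial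

theorem geom_sum_succ_mul_geom_sum_succ {R : Type*} [CommSemiring R] (x : R) (m n : ℕ) :
    (∑ i ∈ range (m + 1), x ^ i) * ∑ i ∈ range (n + 1), x ^ i =
      ∑ i ∈ range (m + n + 1), x ^ i +
        x * ((∑ i ∈ range m, x ^ i) * ∑ i ∈ range n, x ^ i) := by
  have hsplit : ∑ i ∈ range (m + n + 1), x ^ i =
      ∑ i ∈ range (n + 1), x ^ i + x ^ (n + 1) * ∑ i ∈ range m, x ^ i := by
    rw [show m + n + 1 = n + 1 + m by ring, sum_range_add, mul_sum]
    simp only [pow_add]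
  rw [hsplit, geom_sum_succ (n := m), sum_range_succ _ n]
  ring

/-- The rank generating polynomial `1 + X + ⋯ + X ^ (n - 1)` of a chain with `n` elements. -/
noncomputable def chainPoly (n : ℕ) : ℕ[X] := ∑ i ∈ range n, X ^ i

@[simp]
theorem chainPoly_zero : chainPoly 0 = 0 := rfl

@[simp]
theorem chainPoly_one : chainPoly 1 = 1 := by simp [chainPoly]

theorem chainPoly_two : chainPoly 2 = 1 + X := by simp [chainPoly, sum_range_succ]

theorem chainPoly_succ_mul_chainPoly_succ (m n : ℕ) :
    chainPoly (m + 1) * chainPoly (n + 1) =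
      chainPoly (m + n + 1) + X * (chainPoly m * chainPoly n) :=
  geom_sum_succ_mul_geom_sum_succ X m n

theorem coeff_chainPoly_of_lt {i n : ℕ} (h : i < n) : (chainPoly n).coeff i = 1 := by
  simp [chainPoly, coeff_X_pow, h]

theorem coeff_X_mul_chainPoly_mul_chainPoly (m n : ℕ) :
    (X * (chainPoly m * chainPoly n)).coeff ((m + n) / 2) = min m n := by
  induction m generalizing n with
  | zero => simp
  | succ m ih =>
    cases n with
    | zero => simp
    | succ n =>
      rw [show (m + 1 + (n + 1)) / 2 = (m + n) / 2 + 1 by omega, coeff_X_mul,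
        chainPoly_succ_mul_chainPoly_succ, coeff_add, coeff_chainPoly_of_lt (by omega), ih]
      omega

theorem coeff_chainPoly_succ_mul_chainPoly_succ (m n : ℕ) :
    (chainPoly (m + 1) * chainPoly (n + 1)).coeff ((m + n) / 2) = min m n + 1 := by
  rw [← coeff_X_mul, show (m + n) / 2 + 1 = (m + 1 + (n + 1)) / 2 by omega,
    coeff_X_mul_chainPoly_mul_chainPoly]
  omega

/-- The polynomials whose coefficient sequence is symmetric about `d / 2` and unimodal, given as
sums of the extremal ones, the strings of ones centred at `d / 2`. -/
noncomputable def symmUnimodal (d : ℕ) : AddSubmonoid ℕ[X] :=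
  AddSubmonoid.closure {p | ∃ j n, 2 * j + n = d ∧ X ^ j * chainPoly (n + 1) = p}

namespace symmUnimodal

variable {d : ℕ} {p : ℕ[X]}

theorem X_pow_mul_chainPoly_mem (j n : ℕ) :
    X ^ j * chainPoly (n + 1) ∈ symmUnimodal (2 * j + n) :=
  AddSubmonoid.subset_closure ⟨j, n, rfl, rfl⟩

theorem one_mem : 1 ∈ symmUnimodal 0 := by
  simpa using X_pow_mul_chainPoly_mem 0 0

theorem X_pow_mul_mem (hp : p ∈ symmUnimodal d) (j : ℕ) :
    X ^ j * p ∈ symmUnimodal (2 * j + d) := by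
  induction hp using AddSubmonoid.closure_induction with
  | mem p hp =>
    obtain ⟨i, n, rfl, rfl⟩ := hp
    rw [← mul_assoc, ← pow_add, ← add_assoc, ← mul_add]
    exact X_pow_mul_chainPoly_mem (j + i) n
  | zero => simp
  | add p q _ _ hp hq => rw [mul_add]; exact add_mem hp hq

theorem chainPoly_mul_chainPoly_mem (m n : ℕ) :
    chainPoly (m + 1) * chainPoly (n + 1) ∈ symmUnimodal (m + n) := by
  have hchain (k : ℕ) : chainPoly (k + 1) ∈ symmUnimodal k := by
    simpa using X_pow_mul_chainPoly_mem 0 k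
  induction m generalizing n with
  | zero => simpa using hchain n
  | succ m ih =>
    cases n with
    | zero => simpa using hchain (m + 1)
    | succ n =>
      rw [chainPoly_succ_mul_chainPoly_succ]
      have hinner := X_pow_mul_mem (ih n) 1
      rw [pow_one, show 2 * 1 + (m + n) = m + 1 + (n + 1) by ring] at hinner
      exact add_mem (hchain _) hinner

theorem chainPoly_mul_mem (hp : p ∈ symmUnimodal d) (m : ℕ) :
    chainPoly (m + 1) * p ∈ symmUnimodal (m + d) := by
  induction hp using AddSubmonoid.closure_induction with
  | mem p hp =>
    obtain ⟨j, n, rfl, rfl⟩ := hp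
    rw [mul_left_comm, add_left_comm]
    exact X_pow_mul_mem (chainPoly_mul_chainPoly_mem m n) j
  | zero => simp
  | add p q _ _ hp hq => rw [mul_add]; exact add_mem hp hq

theorem one_add_X_pow_mul_mem (hp : p ∈ symmUnimodal d) (m : ℕ) :
    (1 + X) ^ m * p ∈ symmUnimodal (m + d) := by
  induction m with
  | zero => simpa using hp
  | succ m ih =>
    have hmul := chainPoly_mul_mem ih 1
    rwa [one_add_one_eq_two, chainPoly_two, ← mul_assoc, ← pow_succ', ← add_assoc,
      add_comm 1 m] at hmul

theorem mul_coeff_chainPoly_add_two_le (hp : p ∈ symmUnimodal d) (m : ℕ) :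
    m * (chainPoly (m + 2) * p).coeff ((m + 1 + d) / 2) ≤
      (m + 2) * (X * (chainPoly m * p)).coeff ((m + 1 + d) / 2) := by
  induction hp using AddSubmonoid.closure_induction with
  | mem p hp =>
    obtain ⟨j, n, rfl, rfl⟩ := hp
    have hmin : m * (min (m + 1) n + 1) ≤ (m + 2) * min m (n + 1) := by
      rcases le_or_gt m n with h | h
      · rw [min_eq_left (by omega : m ≤ n + 1), mul_comm (m + 2)]
        exact Nat.mul_le_mul_left m (by omega)
      · rw [min_eq_right (by omega : n + 1 ≤ m)]
        exact Nat.mul_le_mul (by omega) (by omega)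
    rw [show (m + 1 + (2 * j + n)) / 2 = (m + 1 + n) / 2 + j by omega,
      mul_left_comm (chainPoly (m + 2)), mul_left_comm (chainPoly m), mul_left_comm X,
      coeff_X_pow_mul, coeff_X_pow_mul, coeff_chainPoly_succ_mul_chainPoly_succ,
      add_right_comm m 1 n, add_assoc m n 1, coeff_X_mul_chainPoly_mul_chainPoly]
    exact hmin
  | zero => simp
  | add p q _ _ hp hq => simp only [mul_add, coeff_add]; exact add_le_add hp hq

theorem coeff_chainPoly_mul_le (hp : p ∈ symmUnimodal d) (m : ℕ) :
    (chainPoly (m + 1) * p).coeff ((m + d) / 2) * 2 ^ m ≤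
      (m + 1) * ((1 + X) ^ m * p).coeff ((m + d) / 2) := by
  induction m generalizing d p with
  | zero => simp
  | succ m ih =>
    have hstep := mul_coeff_chainPoly_add_two_le hp m
    set c := (m + 1 + d) / 2
    have hcenter : (m + (1 + d)) / 2 = c := by omega
    have hsum : (chainPoly (m + 1) * (chainPoly 2 * p)).coeff c =
        (chainPoly (m + 2) * p).coeff c + (X * (chainPoly m * p)).coeff c := by
      rw [← mul_assoc, chainPoly_succ_mul_chainPoly_succ m 1, chainPoly_one, mul_one, add_mul,
        mul_assoc, coeff_add]
    have hind := ih (chainPoly_mul_mem hp 1)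
    rw [hcenter, one_add_one_eq_two] at hind
    refine Nat.le_of_mul_le_mul_left ?_ (by omega : 0 < m + 1)
    calc (m + 1) * ((chainPoly (m + 2) * p).coeff c * 2 ^ (m + 1))
        = (2 * (m + 1) * (chainPoly (m + 2) * p).coeff c) * 2 ^ m := by ring
      _ ≤ ((m + 2) * (chainPoly (m + 1) * (chainPoly 2 * p)).coeff c) * 2 ^ m := by
          rw [hsum]; refine Nat.mul_le_mul_right _ ?_; linarith
      _ = (m + 2) * ((chainPoly (m + 1) * (chainPoly 2 * p)).coeff c * 2 ^ m) := by ring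
      _ ≤ (m + 2) * ((m + 1) * ((1 + X) ^ m * (chainPoly 2 * p)).coeff c) := by gcongr
      _ = _ := by rw [chainPoly_two, pow_succ, mul_assoc]; ring

theorem coeff_prod_chainPoly_mul_le {ι : Type*} (hp : p ∈ symmUnimodal d) (m : ι → ℕ)
    (s : Finset ι) :
    ((∏ i ∈ s, chainPoly (m i + 1)) * p).coeff ((∑ i ∈ s, m i + d) / 2) * 2 ^ ∑ i ∈ s, m i ≤
      (∏ i ∈ s, (m i + 1)) *
        ((1 + X) ^ (∑ i ∈ s, m i) * p).coeff ((∑ i ∈ s, m i + d) / 2) := by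
  classical
  induction s using Finset.induction_on generalizing d p with
  | empty => simp
  | insert a s ha ih =>
    have hrest := ih (chainPoly_mul_mem hp (m a))
    have hfactor := coeff_chainPoly_mul_le (one_add_X_pow_mul_mem hp (∑ i ∈ s, m i)) (m a)
    simp only [prod_insert ha, sum_insert ha]
    generalize ∑ i ∈ s, m i = K at *
    rw [add_left_comm K (m a) d] at hrest
    rw [add_assoc (m a) K d]
    set c := (m a + (K + d)) / 2
    calc _ = (((∏ i ∈ s, chainPoly (m i + 1)) * (chainPoly (m a + 1) * p)).coeff c * 2 ^ K) *
          2 ^ m a := by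
          rw [mul_comm (chainPoly (m a + 1)) (∏ i ∈ s, _), mul_assoc (∏ i ∈ s, _), pow_add]; ring
      _ ≤ ((∏ i ∈ s, (m i + 1)) * ((1 + X) ^ K * (chainPoly (m a + 1) * p)).coeff c) *
          2 ^ m a := by gcongr
      _ = (∏ i ∈ s, (m i + 1)) *
          ((chainPoly (m a + 1) * ((1 + X) ^ K * p)).coeff c * 2 ^ m a) := by
          rw [mul_left_comm (chainPoly _), mul_assoc]
      _ ≤ (∏ i ∈ s, (m i + 1)) *
          ((m a + 1) * ((1 + X) ^ m a * ((1 + X) ^ K * p)).coeff c) := by gcongr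
      _ = _ := by rw [pow_add, mul_assoc ((1 + X) ^ m a)]; ring

end symmUnimodal

/-- For every chain `{0, …, l}`, the antichains of `{0, …, l} × S` have at most as many elements
as the middle coefficient of `chainPoly (l + 1) * p`, where `p` stands for the rank generating
polynomial of `S` and `d` for its degree. The extra chain makes this property inductive: a product
of two chains splits into chains. -/
def AntichainBound {Q : Type*} [Preorder Q] (S : Set Q) (d : ℕ) (p : ℕ[X]) : Prop :=
  ∀ ⦃l : ℕ⦄ ⦃A : Finset (ℕ × Q)⦄, (A : Set (ℕ × Q)) ⊆ Set.Iic l ×ˢ S →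
    IsAntichain (· ≤ ·) (A : Set (ℕ × Q)) → #A ≤ (chainPoly (l + 1) * p).coeff ((l + d) / 2)

namespace AntichainBound

variable {Q : Type*} [Preorder Q] {S : Set Q} {d l : ℕ} {p : ℕ[X]}

theorem card_le_of_reflects {α : Type*} [Preorder α] (hS : AntichainBound S d p) {A : Finset α}
    (hA : IsAntichain (· ≤ ·) (A : Set α)) (φ : α → ℕ × Q)
    (hmaps : ∀ a ∈ A, φ a ∈ Set.Iic l ×ˢ S)
    (hreflects : ∀ a ∈ A, ∀ b ∈ A, φ a ≤ φ b → a ≤ b) :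
    #A ≤ (chainPoly (l + 1) * p).coeff ((l + d) / 2) := by
  classical
  have heq : ∀ a ∈ A, ∀ b ∈ A, φ a ≤ φ b → a = b := fun a ha b hb h =>
    hA.eq ha hb (hreflects a ha b hb h)
  have hcard : #(A.image φ) = #A :=
    card_image_of_injOn fun a ha b hb h => heq a ha b hb h.le
  rw [← hcard]
  apply hS
  · rw [coe_image]
    exact Set.image_subset_iff.2 hmaps
  · rw [coe_image]
    rintro _ ⟨a, ha, rfl⟩ _ ⟨b, hb, rfl⟩ hne hle
    exact hne (congrArg φ (heq a ha b hb hle))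

theorem of_reflects {Q' : Type*} [Preorder Q'] {S' : Set Q'} (hS : AntichainBound S d p)
    (φ : Q' → Q) (hmaps : Set.MapsTo φ S' S)
    (hreflects : ∀ a ∈ S', ∀ b ∈ S', φ a ≤ φ b → a ≤ b) :
    AntichainBound S' d p := fun _ _ hAS hA =>
  hS.card_le_of_reflects hA (Prod.map id φ) (fun _ ha => ⟨(hAS ha).1, hmaps (hAS ha).2⟩)
    fun a ha b hb h => ⟨h.1, hreflects a.2 (hAS ha).2 b.2 (hAS hb).2 h.2⟩

theorem singleton (q : Q) : AntichainBound {q} 0 1 := by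
  intro l A hAS hA
  have hsnd : ∀ a ∈ A, a.2 = q := fun a ha => (hAS ha).2
  rw [mul_one, coeff_chainPoly_of_lt (by omega), card_le_one]
  intro a ha b hb
  have hab : a.2 = b.2 := (hsnd a ha).trans (hsnd b hb).symm
  rcases le_total a.1 b.1 with h | h
  · exact hA.eq ha hb ⟨h, hab.le⟩
  · exact hA.eq' ha hb ⟨h, hab.ge⟩

variable {k : ℕ} {A : Finset (ℕ × ℕ × Q)}

/-- On the hook `{x | x.1 = l ∨ x.2.1 = 0}` of the grid, the map `(a, b) ↦ a + b` reflects `≤`. -/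
theorem card_hook_le (hS : AntichainBound S d p)
    (hAS : (A : Set (ℕ × ℕ × Q)) ⊆ Set.Iic l ×ˢ Set.Iic k ×ˢ S)
    (hA : IsAntichain (· ≤ ·) (A : Set (ℕ × ℕ × Q)))
    (hhook : ∀ x ∈ A, x.1 = l ∨ x.2.1 = 0) :
    #A ≤ (chainPoly (l + k + 1) * p).coeff ((l + (k + d)) / 2) := by
  rw [← add_assoc]
  refine hS.card_le_of_reflects hA (fun x => (x.1 + x.2.1, x.2.2)) ?_ ?_
  · intro x hx
    obtain ⟨hxl, hxk, hxS⟩ := hAS hx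
    exact ⟨Set.mem_Iic.2 (add_le_add hxl hxk), hxS⟩
  · rintro ⟨a, b, q⟩ hx ⟨a', b', q'⟩ hx' ⟨hsum, hq⟩
    obtain ⟨hal, -, -⟩ := hAS hx
    obtain ⟨hal', -, -⟩ := hAS hx'
    have hcorner := hhook _ hx
    have hcorner' := hhook _ hx'
    simp only [Set.mem_Iic] at hal hal' hcorner hcorner' hsum
    exact ⟨show a ≤ a' by omega, show b ≤ b' by omega, hq⟩

theorem card_off_hook_le {q : ℕ[X]} (hS : AntichainBound (Set.Iic k ×ˢ S) d q)
    (hAS : (A : Set (ℕ × ℕ × Q)) ⊆ Set.Iic (l + 1) ×ˢ Set.Iic (k + 1) ×ˢ S)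
    (hA : IsAntichain (· ≤ ·) (A : Set (ℕ × ℕ × Q)))
    (hoff : ∀ x ∈ A, ¬(x.1 = l + 1 ∨ x.2.1 = 0)) :
    #A ≤ (chainPoly (l + 1) * q).coeff ((l + d) / 2) := by
  refine hS.card_le_of_reflects hA (fun x => (x.1, x.2.1 - 1, x.2.2)) ?_ ?_
  · intro x hx
    obtain ⟨hxl, hxk, hxS⟩ := hAS hx
    have hxoff := hoff x hx
    simp only [Set.mem_Iic] at hxl hxk
    exact ⟨show x.1 ≤ l by omega, show x.2.1 - 1 ≤ k by omega, hxS⟩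
  · rintro ⟨a, b, q⟩ hx ⟨a', b', q'⟩ hx' ⟨ha, hb, hq⟩
    have hxoff := hoff _ hx
    have hxoff' := hoff _ hx'
    simp only at hxoff hxoff' hb
    exact ⟨ha, show b ≤ b' by omega, hq⟩

theorem Iic_prod (hS : AntichainBound S d p) (k : ℕ) :
    AntichainBound (Set.Iic k ×ˢ S) (k + d) (chainPoly (k + 1) * p) := by
  induction k with
  | zero =>
    intro l A hAS hA
    simpa using hS.card_hook_le hAS hA fun x hx => Or.inr (Nat.le_zero.1 (hAS hx).2.1)
  | succ k ih =>
    intro l A hAS hA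
    cases l with
    | zero => simpa using hS.card_hook_le hAS hA fun x hx => Or.inl (Nat.le_zero.1 (hAS hx).1)
    | succ l =>
      let IsHook : ℕ × ℕ × Q → Prop := fun x => x.1 = l + 1 ∨ x.2.1 = 0
      have hhook : #{x ∈ A | IsHook x} ≤
          (chainPoly (l + 1 + (k + 1) + 1) * p).coeff ((l + 1 + (k + 1 + d)) / 2) :=
        hS.card_hook_le (fun x hx => hAS (mem_filter.1 hx).1)
          (hA.subset (coe_subset.2 (filter_subset _ _))) fun x hx => (mem_filter.1 hx).2
      have hinner : #{x ∈ A | ¬IsHook x} ≤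
          (chainPoly (l + 1) * (chainPoly (k + 1) * p)).coeff ((l + (k + d)) / 2) :=
        ih.card_off_hook_le (fun x hx => hAS (mem_filter.1 hx).1)
          (hA.subset (coe_subset.2 (filter_subset _ _))) fun x hx => (mem_filter.1 hx).2
      rw [← card_filter_add_card_filter_not IsHook, ← mul_assoc, chainPoly_succ_mul_chainPoly_succ,
        add_mul, coeff_add, mul_assoc X, mul_assoc (chainPoly (l + 1))]
      refine add_le_add hhook ?_
      rwa [show (l + 1 + (k + 1 + d)) / 2 = (l + (k + d)) / 2 + 1 by omega, coeff_X_mul]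

theorem Iic_piecewise {ι : Type*} [DecidableEq ι] (m : ι → ℕ) (s : Finset ι) :
    AntichainBound (Set.Iic (s.piecewise m 0)) (∑ i ∈ s, m i)
      (∏ i ∈ s, chainPoly (m i + 1)) := by
  induction s using Finset.induction_on with
  | empty =>
    have hIic : Set.Iic (0 : ι → ℕ) = {0} := Set.Iic_bot
    simpa [hIic] using singleton (0 : ι → ℕ)
  | insert j s hj ih =>
    rw [sum_insert hj, prod_insert hj, piecewise_insert]
    refine (ih.Iic_prod (m j)).of_reflects (fun x => (x j, Function.update x j 0)) ?_ ?_
    · intro x hx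
      refine ⟨by simpa using hx j, fun i => ?_⟩
      obtain rfl | hij := eq_or_ne i j
      · simp
      · simpa [hij] using hx i
    · rintro x - y - ⟨hxyj, hxy⟩ i
      obtain rfl | hij := eq_or_ne i j
      · exact hxyj
      · simpa [hij] using hxy i

end AntichainBound

section Box

variable {ι : Type*} [Fintype ι] {m : ι → ℕ} {A : Finset (ι → ℕ)}

theorem card_le_coeff_prod_chainPoly (hA : IsAntichain (· ≤ ·) (A : Set (ι → ℕ)))
    (hAm : ∀ a ∈ A, a ≤ m) :
    #A ≤ (∏ i, chainPoly (m i + 1)).coeff ((∑ i, m i) / 2) := by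
  classical
  have hbox := AntichainBound.Iic_piecewise m univ
  rw [piecewise_univ] at hbox
  simpa using hbox.card_le_of_reflects (l := 0) hA (fun a => (0, a))
    (fun a ha => ⟨Set.mem_Iic.2 le_rfl, hAm a ha⟩) fun _ _ _ _ h => h.2

theorem card_mul_two_pow_le_of_isAntichain (hA : IsAntichain (· ≤ ·) (A : Set (ι → ℕ)))
    (hAm : ∀ a ∈ A, a ≤ m) :
    #A * 2 ^ ∑ i, m i ≤ (∏ i, (m i + 1)) * (∑ i, m i).choose ((∑ i, m i) / 2) :=
  calc #A * 2 ^ ∑ i, m i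
      ≤ (∏ i, chainPoly (m i + 1)).coeff ((∑ i, m i) / 2) * 2 ^ ∑ i, m i := by
        gcongr; exact card_le_coeff_prod_chainPoly hA hAm
    _ ≤ (∏ i, (m i + 1)) * ((1 + X : ℕ[X]) ^ ∑ i, m i).coeff ((∑ i, m i) / 2) := by
        simpa using symmUnimodal.coeff_prod_chainPoly_mul_le symmUnimodal.one_mem m univ
    _ = _ := by rw [coeff_one_add_X_pow, Nat.cast_id]

end Box

/-- Let `P` be a finite partially ordered set of cardinality `n ≥ 2` that is order-isomorphic
to the cartesian product (with componentwise order) of chains `C 1, …, C t`, where `C i` is a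
chain (totally ordered set) of cardinality `k i`.  Then every antichain of `P` has cardinality
at most `(n / 2^K) · binom(K, ⌊K/2⌋)`, where `K = ∑ i (k i − 1)`. -/
theorem stmt_8 (P : Type*) [PartialOrder P] [Fintype P] (n : ℕ) (hn : 2 ≤ n)
    (hcard : Fintype.card P = n)
    (t : ℕ) (C : Fin t → Type*) [∀ i, LinearOrder (C i)] [∀ i, Fintype (C i)]
    (k : Fin t → ℕ) (hk : ∀ i, Fintype.card (C i) = k i)
    (e : P ≃o ((i : Fin t) → C i))
    (A : Set P) (hA : IsAntichain (· ≤ ·) A) :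
    (Nat.card A : ℝ) ≤
      (n : ℝ) / 2 ^ (∑ i, (k i - 1)) * (∑ i, (k i - 1)).choose ((∑ i, (k i - 1)) / 2) := by
  classical
  obtain ⟨p⟩ : Nonempty P := Fintype.card_pos_iff.1 (by omega)
  have hkpos (i : Fin t) : 0 < k i := hk i ▸ Fintype.card_pos_iff.2 ⟨e p i⟩
  have hprod : ∏ i, (k i - 1 + 1) = n := by
    rw [← hcard, Fintype.card_congr e.toEquiv, Fintype.card_pi]
    exact prod_congr rfl fun i _ => by rw [Nat.sub_add_cancel (hkpos i), hk]
  let rank (i : Fin t) : C i ≃o Fin (k i) := (Fintype.orderIsoFinOfCardEq (C i) (hk i)).symm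
  let coords : P ↪o (Fin t → ℕ) := OrderEmbedding.ofMapLEIff (fun x i => (rank i (e x i) : ℕ))
    fun _ _ => (forall_congr' fun i => (rank i).le_iff_le).trans e.le_iff_le
  have hbound := card_mul_two_pow_le_of_isAntichain (m := fun i => k i - 1)
    (A := A.toFinset.map coords.toEmbedding)
    (by simpa using hA.image_embedding coords)
    (by
      simp only [mem_map, forall_exists_index, and_imp]
      rintro _ x - rfl i
      exact Nat.le_sub_one_of_lt (rank i (e x i)).isLt)
  rw [card_map, ← Nat.card_eq_card_toFinset, hprod] at hbound
  rw [div_mul_eq_mul_div, le_div_iff₀ (by positivity)]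
  exact_mod_cast hbound
end

section
/- Let P be a finite partially ordered set of cardinality n ≥ 2 that is order-isomorphic to a cartesian product of t chains (with the componentwise order). Then every antichain of P has cardinality at most ⌊b·n/√(log n)⌋, where b := √(2/π). Furthermore, if each of the t chains has the same cardinality p, then every antichain of P has cardinality at most ⌊b·p^t/√(t(p−1))⌋. -/
/-!
The symmetric chain decomposition of de Bruijn, Tengbergen and Kruyswijk covers a product of chains
of ranks `k i` by chains, as many as the product has elements of middle rank, and an antichain
meets each of them at most once. To bound their number, let `g h` be the sum of the chain lengths
truncated at `h`, extended to an odd function of `h : ℤ`. Cutting `C × Fin (k + 1)`, for a chain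
`C`, into hooks shows that a further factor of rank `k` replaces `g` by `(k + 1)` times its average
over the progression `h - k, h - k + 2, …, h + k`. On odd functions which are concave on the
nonnegative integers, this average is at most the `k`-fold iterate of the average over `h - 1`
and `h + 1`, which is what `k` factors of rank `1` would produce. So the density of an antichain is
at most that of the middle layer of the Boolean lattice of rank `N = ∑ i, k i`, which is
`N.choose (N / 2) / 2 ^ N ≤ √(2 / π) / √N` by the Wallis product.
-/

open Finset Real

section CentralBinomial

theorem sq_centralBinom_div_four_pow_mul_wallis (m : ℕ) :
    ((m.centralBinom : ℝ) / 4 ^ m) ^ 2 * (Wallis.W m * (2 * m + 1)) = 1 := by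
  have hfact : (m.centralBinom : ℝ) * m.factorial * m.factorial = (2 * m).factorial := by
    have h := Nat.choose_mul_factorial_mul_factorial (n := 2 * m) (k := m) (by omega)
    rw [show 2 * m - m = m by omega, ← Nat.centralBinom_eq_two_mul_choose] at h
    exact_mod_cast h
  have hm : (m.factorial : ℝ) ≠ 0 := by positivity
  have hc : (m.centralBinom : ℝ) ≠ 0 := by exact_mod_cast m.centralBinom_ne_zero
  rw [Wallis.W_eq_factorial_ratio, ← hfact, show (4 : ℝ) = 2 ^ 2 by norm_num, ← pow_mul]
  field_simp
  ring

theorem sq_centralBinom_div_four_pow_mul_pi_le (m : ℕ) :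
    ((m.centralBinom : ℝ) / 4 ^ m) ^ 2 * (π * m) ≤ 1 := by
  have hW : π * m ≤ Wallis.W m * (2 * m + 1) := calc
    π * m ≤ (2 * m + 1) / (2 * m + 2) * (π / 2) * (2 * m + 1) := by
      rw [div_mul_eq_mul_div, div_mul_eq_mul_div, le_div_iff₀ (by positivity)]
      nlinarith [pi_pos]
    _ ≤ Wallis.W m * (2 * m + 1) := by gcongr; exact Wallis.le_W m
  calc ((m.centralBinom : ℝ) / 4 ^ m) ^ 2 * (π * m)
    _ ≤ ((m.centralBinom : ℝ) / 4 ^ m) ^ 2 * (Wallis.W m * (2 * m + 1)) := by gcongr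
    _ = 1 := sq_centralBinom_div_four_pow_mul_wallis m

theorem centralBinom_succ_eq_two_mul_choose_half (m : ℕ) :
    (m + 1).centralBinom = 2 * (2 * m + 1).choose m := by
  rw [Nat.centralBinom_eq_two_mul_choose, show 2 * (m + 1) = 2 * m + 1 + 1 by ring,
    Nat.choose_succ_succ, Nat.choose_symm_half]
  ring

theorem sq_choose_half_div_two_pow_mul_pi_le (N : ℕ) :
    ((N.choose (N / 2) : ℝ) / 2 ^ N) ^ 2 * (π * N) ≤ 2 := by
  obtain ⟨m, rfl | rfl⟩ := N.even_or_odd'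
  · have h := sq_centralBinom_div_four_pow_mul_pi_le m
    rw [Nat.centralBinom_eq_two_mul_choose, show (4 : ℝ) = 2 ^ 2 by norm_num, ← pow_mul] at h
    rw [Nat.mul_div_cancel_left _ two_pos]
    push_cast
    linarith
  · have h := sq_centralBinom_div_four_pow_mul_pi_le (m + 1)
    have hratio : ((m + 1).centralBinom : ℝ) / 4 ^ (m + 1) =
        (2 * m + 1).choose m / 2 ^ (2 * m + 1) := by
      rw [centralBinom_succ_eq_two_mul_choose_half, show (4 : ℝ) = 2 ^ 2 by norm_num, ← pow_mul,
        show 2 * (m + 1) = 2 * m + 1 + 1 by ring, pow_succ _ (2 * m + 1)]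
      push_cast
      field_simp
    rw [hratio] at h
    rw [show (2 * m + 1) / 2 = m by omega]
    push_cast at h ⊢
    nlinarith [mul_nonneg (sq_nonneg ((2 * m + 1).choose m / 2 ^ (2 * m + 1) : ℝ)) pi_pos.le]

theorem choose_half_div_two_pow_le {N : ℕ} (hN : 0 < N) :
    (N.choose (N / 2) : ℝ) / 2 ^ N ≤ √(2 / π) / √N := by
  rw [← sqrt_div (by positivity), div_div]
  apply le_sqrt_of_sq_le
  rw [le_div_iff₀ (by positivity)]
  exact sq_choose_half_div_two_pow_mul_pi_le N

end CentralBinomial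

section StepAverage

/-- The average of `f` over the `k + 1` points `x - k, x - k + 2, …, x + k`, that is, the
convolution of `f` with the normalized rank distribution of a chain of rank `k`. -/
noncomputable def stepAverage (k : ℕ) (f : ℤ → ℝ) (x : ℤ) : ℝ :=
  (∑ j ∈ range (k + 1), f (x + k - 2 * j)) / (k + 1)

theorem sum_range_eq_mul_stepAverage (k : ℕ) (f : ℤ → ℝ) (x : ℤ) :
    ∑ j ∈ range (k + 1), f (x + k - 2 * j) = (k + 1) * stepAverage k f x := by
  rw [stepAverage, mul_div_cancel₀ _ (by positivity)]

theorem stepAverage_zero (f : ℤ → ℝ) : stepAverage 0 f = f := by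
  ext x
  simp [stepAverage]

theorem stepAverage_one (f : ℤ → ℝ) (x : ℤ) :
    stepAverage 1 f x = (f (x + 1) + f (x - 1)) / 2 := by
  simp only [stepAverage, sum_range_succ, range_zero, sum_empty]
  norm_num
  ring_nf

theorem stepAverage_smul (k : ℕ) (c : ℝ) (f : ℤ → ℝ) :
    stepAverage k (c • f) = c • stepAverage k f := by
  ext x
  simp only [stepAverage, Pi.smul_apply, smul_eq_mul, ← mul_sum, mul_div_assoc]

theorem sum_range_step_reflect {M : Type*} [AddCommMonoid M] (k : ℕ) (f : ℤ → M) (x : ℤ) :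
    ∑ j ∈ range (k + 1), f (x + k - 2 * j) = ∑ j ∈ range (k + 1), f (x - k + 2 * j) := by
  rw [← sum_flip]
  refine sum_congr rfl fun j hj => ?_
  rw [Nat.cast_sub (Nat.lt_succ_iff.1 (mem_range.1 hj))]
  ring_nf

variable {f g : ℤ → ℝ}

theorem odd_stepAverage (hf : f.Odd) (k : ℕ) : (stepAverage k f).Odd := by
  intro x
  rw [stepAverage, stepAverage, sum_range_step_reflect, ← neg_div, ← sum_neg_distrib]
  refine congrArg (· / _) (sum_congr rfl fun j _ => ?_)
  rw [← hf]
  ring_nf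

theorem odd_iterate_stepAverage (hf : f.Odd) (k N : ℕ) : ((stepAverage k)^[N] f).Odd :=
  Function.Iterate.rec (fun f : ℤ → ℝ => f.Odd) hf (fun _ h => odd_stepAverage h k) N

/-- The terms of index at least `m` cancel in pairs, since `f` is odd. -/
theorem sum_range_min_of_odd (hf : f.Odd) (m k : ℕ) :
    ∑ j ∈ range (min m (k + 1)), f (m + k - 2 * j) = (k + 1) * stepAverage k f m := by
  rw [← sum_range_eq_mul_stepAverage]
  rcases le_or_gt (k + 1) m with h | h
  · rw [min_eq_right h]
  · obtain ⟨r, rfl⟩ := Nat.exists_eq_add_of_le (Nat.lt_succ_iff.1 h)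
    have hcancel : ∑ j ∈ range (r + 1), f (0 + r - 2 * j) = 0 := by
      rw [sum_range_eq_mul_stepAverage, (odd_stepAverage hf r).map_zero, mul_zero]
    rw [min_eq_left h.le, add_assoc, sum_range_add, left_eq_add, ← hcancel]
    refine sum_congr rfl fun j _ => congrArg f ?_
    push_cast
    ring

theorem stepAverage_le_stepAverage (hf : f.Odd) (hg : g.Odd) (hfg : ∀ x ≥ 0, f x ≤ g x) (k : ℕ) :
    ∀ x ≥ 0, stepAverage k f x ≤ stepAverage k g x := by
  intro x hx
  lift x to ℕ using hx
  refine le_of_mul_le_mul_left ?_ (show (0 : ℝ) < k + 1 by positivity)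
  rw [← sum_range_min_of_odd hf, ← sum_range_min_of_odd hg]
  refine sum_le_sum fun j hj => hfg _ ?_
  have := mem_range.1 hj
  omega

theorem iterate_stepAverage_one_eq_sum_choose (N : ℕ) (f : ℤ → ℝ) (x : ℤ) :
    (stepAverage 1)^[N] f x = (∑ m ∈ range (N + 1), N.choose m * f (x + N - 2 * m)) / 2 ^ N := by
  induction N generalizing x with
  | zero => simp
  | succ N ih =>
    have hpascal := sum_choose_succ_mul (fun i j => f (x + j - i)) N
    rw [Function.iterate_succ_apply', stepAverage_one, ih, ih, ← add_div, div_div, ← pow_succ]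
    congr 1
    convert hpascal.symm using 1
    · congr 1 <;>
      · refine sum_congr rfl fun m hm => ?_
        have := mem_range.1 hm
        congr 2
        omega
    · refine sum_congr rfl fun m hm => ?_
      have := mem_range.1 hm
      congr 2
      omega

end StepAverage

section OddConcave

/-- An odd function on `ℤ` which is concave on the nonnegative integers. Up to normalization, these
are the functions `h ↦ μ (-h, h]`, for symmetric unimodal `μ`, extended to negative `h` by
oddness. -/
structure OddConcave (f : ℤ → ℝ) : Prop where
  odd : f.Odd
  concave : ∀ x ≥ 0, f (x + 1) + f (x - 1) ≤ 2 * f x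

namespace OddConcave

variable {f : ℤ → ℝ}

theorem stepAverage_one (hf : OddConcave f) : OddConcave (stepAverage 1 f) where
  odd := odd_stepAverage hf.odd 1
  concave x hx := by
    rcases hx.eq_or_lt with rfl | hx
    · have hodd := odd_stepAverage hf.odd 1
      rw [zero_add, zero_sub, hodd, hodd.map_zero]
      simp
    · simp only [_root_.stepAverage_one]
      have h₁ := hf.concave (x + 1) (by omega)
      have h₂ := hf.concave (x - 1) (by omega)
      linarith

theorem iterate_stepAverage_one (hf : OddConcave f) (N : ℕ) :
    OddConcave ((stepAverage 1)^[N] f) :=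
  Function.Iterate.rec OddConcave hf (fun _ => stepAverage_one) N

theorem increment_antitone (hf : OddConcave f) {x y : ℤ} (hx : 0 ≤ x) (hxy : x ≤ y) :
    f (y + 1) - f y ≤ f (x + 1) - f x := by
  induction y, hxy using Int.leInduction with
  | base => rfl
  | succ y hxy ih =>
    have := hf.concave (y + 1) (by omega)
    rw [add_sub_cancel_right] at this
    linarith

theorem increment_le_of_central (hf : OddConcave f) {x y : ℤ} (hxy : x ≤ y) (hyx : -1 - y ≤ x) :
    f (y + 1) - f y ≤ f (x + 1) - f x := by
  rcases le_or_gt 0 x with hx | hx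
  · exact hf.increment_antitone hx hxy
  · have h := hf.increment_antitone (x := -1 - x) (y := y) (by omega) (by omega)
    rw [show -1 - x + 1 = -x by ring, show -1 - x = -(x + 1) by ring, hf.odd, hf.odd] at h
    linarith

theorem add_sub_antitone (hf : OddConcave f) {x d d' : ℤ} (hx : 0 ≤ x) (hd : 0 ≤ d)
    (hdd' : d ≤ d') : f (x + d') + f (x - d') ≤ f (x + d) + f (x - d) := by
  induction d', hdd' using Int.leInduction with
  | base => rfl
  | succ d' hdd' ih =>
    have h := hf.increment_le_of_central (x := x - (d' + 1)) (y := x + d') (by omega) (by omega)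
    rw [show x - (d' + 1) + 1 = x - d' by ring, add_assoc] at h
    linarith

theorem add_sub_le_two_mul_stepAverage (hf : OddConcave f) (k : ℕ) {x : ℤ} (hx : 0 ≤ x) :
    f (x + k) + f (x - k) ≤ 2 * stepAverage k f x := by
  have hpair : ∀ j ∈ range (k + 1),
      f (x + k) + f (x - k) ≤ f (x + k - 2 * j) + f (x - k + 2 * j) := fun j hj => by
    have hj := mem_range.1 hj
    rcases le_total (2 * j) k with h | h
    · have := hf.add_sub_antitone (d := k - 2 * j) (d' := k) hx (by omega) (by omega)
      ring_nf at this ⊢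
      exact this
    · have := hf.add_sub_antitone (d := 2 * j - k) (d' := k) hx (by omega) (by omega)
      ring_nf at this ⊢
      linarith
  have hsum := card_nsmul_le_sum _ _ _ hpair
  rw [sum_add_distrib, ← sum_range_step_reflect, sum_range_eq_mul_stepAverage, card_range,
    nsmul_eq_mul, ← two_mul, mul_left_comm] at hsum
  push_cast at hsum
  exact le_of_mul_le_mul_left hsum (by positivity)

theorem stepAverage_succ_le (hf : OddConcave f) (k : ℕ) {x : ℤ} (hx : 0 ≤ x) :
    stepAverage (k + 1) f x ≤ stepAverage 1 (stepAverage k f) x := by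
  have hextreme := hf.add_sub_le_two_mul_stepAverage (k + 1) hx
  have hsum := sum_range_eq_mul_stepAverage (k + 1) f x
  have hlast : (k + 2) * stepAverage (k + 1) f x =
      (k + 1) * stepAverage k f (x + 1) + f (x - (k + 1 : ℕ)) := by
    rw [← sum_range_eq_mul_stepAverage]
    rw [sum_range_succ] at hsum
    push_cast at hsum ⊢
    ring_nf at hsum ⊢
    linarith
  have hfirst : (k + 2) * stepAverage (k + 1) f x =
      (k + 1) * stepAverage k f (x - 1) + f (x + (k + 1 : ℕ)) := by
    rw [← sum_range_eq_mul_stepAverage]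
    rw [sum_range_succ'] at hsum
    push_cast at hsum ⊢
    ring_nf at hsum ⊢
    linarith
  rw [_root_.stepAverage_one]
  refine le_of_mul_le_mul_left ?_ (show (0 : ℝ) < k + 1 by positivity)
  linarith

theorem stepAverage_le_iterate (hf : OddConcave f) (k : ℕ) :
    ∀ x ≥ 0, stepAverage k f x ≤ (stepAverage 1)^[k] f x := by
  induction k with
  | zero => simp [stepAverage_zero]
  | succ k ih =>
    intro x hx
    rw [Function.iterate_succ_apply']
    exact (hf.stepAverage_succ_le k hx).trans <|
      stepAverage_le_stepAverage (odd_stepAverage hf.odd k) (odd_iterate_stepAverage hf.odd 1 k)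
        ih 1 x hx

end OddConcave

end OddConcave

section CentralMass

/-- For `0 ≤ m`, the truncation of `x` to the interval `[-m, m]`. This formula for it is odd and
symmetric in the two arguments. -/
noncomputable def symmClamp (m x : ℤ) : ℝ := ((|x + m| - |x - m| : ℤ) : ℝ) / 2

theorem symmClamp_comm (m x : ℤ) : symmClamp m x = symmClamp x m := by
  rw [symmClamp, symmClamp, add_comm, abs_sub_comm]

theorem odd_symmClamp (m : ℤ) : (symmClamp m).Odd := by
  intro x
  rw [symmClamp, symmClamp, ← abs_neg (-x + m), ← abs_neg (-x - m), ← neg_div]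
  push_cast
  ring_nf

theorem symmClamp_one_right {m : ℤ} (hm : 0 < m) : symmClamp m 1 = 1 := by
  rw [symmClamp, abs_of_nonneg (by omega), abs_of_nonpos (by omega)]
  push_cast
  ring

theorem symmClamp_one_eq_sign (x : ℤ) : symmClamp 1 x = x.sign := by
  rcases lt_trichotomy x 0 with hx | rfl | hx
  · rw [← neg_neg x, odd_symmClamp, symmClamp_comm, symmClamp_one_right (by omega),
      Int.sign_neg, Int.sign_eq_one_of_pos (by omega)]
    simp
  · simp [symmClamp]
  · rw [symmClamp_comm, symmClamp_one_right hx, Int.sign_eq_one_of_pos hx, Int.cast_one]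

theorem oddConcave_symmClamp_one : OddConcave (symmClamp 1) where
  odd := odd_symmClamp 1
  concave x hx := by
    simp only [symmClamp_one_eq_sign]
    obtain rfl | rfl | hx : x = 0 ∨ x = 1 ∨ 1 < x := by omega
    · simp
    · norm_num [Int.sign]
    · rw [Int.sign_eq_one_of_pos (by omega), Int.sign_eq_one_of_pos (by omega),
        Int.sign_eq_one_of_pos (by omega)]
      norm_num

theorem symmClamp_one_add_one_sub (x : ℤ) :
    symmClamp 1 (x + 1) - symmClamp 1 x = if x = 0 ∨ x = -1 then 1 else 0 := by
  simp only [symmClamp_one_eq_sign]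
  obtain hx | rfl | rfl | hx : 0 < x ∨ x = 0 ∨ x = -1 ∨ x < -1 := by omega
  · rw [Int.sign_eq_one_of_pos hx, Int.sign_eq_one_of_pos (by omega), if_neg (by omega), sub_self]
  · simp
  · simp
  · rw [Int.sign_eq_neg_one_of_neg (by omega), Int.sign_eq_neg_one_of_neg (by omega),
      if_neg (by omega), sub_self]

theorem stepAverage_symmClamp_comm (k : ℕ) (m x : ℤ) :
    stepAverage k (symmClamp m) x = stepAverage k (symmClamp x) m := by
  have hreflect := sum_range_step_reflect k (fun y => ((|x - y| : ℤ) : ℝ)) m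
  simp only [stepAverage, symmClamp, ← sum_div, Int.cast_sub, sum_sub_distrib]
  congr 3
  · exact sum_congr rfl fun j _ => by ring_nf
  · simp only [abs_sub_comm (_ : ℤ) x, hreflect]
    exact sum_congr rfl fun j _ => by ring_nf

/-- For `0 ≤ h`, the fraction of the Boolean lattice of rank `N` lying in its `h` largest layers,
extended to an odd function of `h`. -/
noncomputable def centralMass (N : ℕ) : ℤ → ℝ := (stepAverage 1)^[N] (symmClamp 1)

theorem oddConcave_centralMass (N : ℕ) : OddConcave (centralMass N) :=
  oddConcave_symmClamp_one.iterate_stepAverage_one N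

theorem stepAverage_centralMass_le (k N : ℕ) :
    ∀ h ≥ 0, stepAverage k (centralMass N) h ≤ centralMass (k + N) h := by
  rw [centralMass, centralMass, Function.iterate_add_apply]
  exact (oddConcave_centralMass N).stepAverage_le_iterate k

theorem centralMass_one (N : ℕ) : centralMass N 1 = N.choose (N / 2) / 2 ^ N := by
  have hsplit : centralMass N 1 = centralMass N 1 - centralMass N 0 := by
    rw [(oddConcave_centralMass N).odd.map_zero, sub_zero]
  have hjump (m : ℕ) : symmClamp 1 (1 + N - 2 * m) - symmClamp 1 (0 + N - 2 * m) =
      if m = (N + 1) / 2 then 1 else 0 := by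
    rw [show (1 + N - 2 * m : ℤ) = 0 + N - 2 * m + 1 by ring, symmClamp_one_add_one_sub]
    exact if_congr (by omega) rfl rfl
  rw [hsplit, centralMass, iterate_stepAverage_one_eq_sum_choose,
    iterate_stepAverage_one_eq_sum_choose, ← sub_div, ← sum_sub_distrib]
  simp only [← mul_sub, hjump, mul_ite, mul_one, mul_zero, sum_ite_eq']
  rw [if_pos (mem_range.2 (by omega)), ← Nat.choose_symm (by omega),
    show N - (N + 1) / 2 = N / 2 by omega]

end CentralMass

section ChainCover

/-- A cover of `P` by finitely many nonempty chains. The chain of index `i` has rank `rank i`, that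
is, length `rank i + 1`. -/
structure ChainCover (P : Type*) [Preorder P] where
  ι : Type
  [fintype : Fintype ι]
  rank : ι → ℕ
  chain (i : ι) : Fin (rank i + 1) →o P
  exists_eq (x : P) : ∃ i c, chain i c = x

namespace ChainCover

attribute [instance] ChainCover.fintype

variable {P Q : Type*}

/-- The sum of the lengths of the chains, each truncated at `h` (for `0 ≤ h`), extended to an odd
function of `h`. -/
noncomputable def truncatedSize [Preorder P] (𝒞 : ChainCover P) (h : ℤ) : ℝ :=
  ∑ i, symmClamp (𝒞.rank i + 1) h

theorem odd_truncatedSize [Preorder P] (𝒞 : ChainCover P) : 𝒞.truncatedSize.Odd := fun h => by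
  simp only [truncatedSize, odd_symmClamp _ h, sum_neg_distrib]

theorem truncatedSize_one [Preorder P] (𝒞 : ChainCover P) :
    𝒞.truncatedSize 1 = Fintype.card 𝒞.ι := by
  simp [truncatedSize, symmClamp_one_right]

theorem card_antichain_le [PartialOrder P] (𝒞 : ChainCover P) {A : Set P}
    (hA : IsAntichain (· ≤ ·) A) : Nat.card A ≤ Fintype.card 𝒞.ι := by
  choose i c hic using 𝒞.exists_eq
  have hinj : Function.Injective fun a : A => i a := by
    intro a b (hab : i a = i b)
    have hchain : IsChain (· ≤ ·) (Set.range (𝒞.chain (i a))) :=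
      (𝒞.chain (i a)).monotone.isChain_range
    exact Subtype.ext <| inter_subsingleton_of_isChain_of_isAntichain hchain hA
      ⟨⟨c a, hic a⟩, a.2⟩ ⟨hab ▸ ⟨c b, hic b⟩, b.2⟩
  simpa using Nat.card_le_card_of_injective _ hinj

/-- The images of the chains under a monotone surjection. -/
def map [Preorder P] [Preorder Q] (𝒞 : ChainCover P) (φ : P →o Q) (hφ : Function.Surjective φ) :
    ChainCover Q where
  ι := 𝒞.ι
  rank := 𝒞.rank
  chain i := φ.comp (𝒞.chain i)
  exists_eq y := by
    obtain ⟨x, rfl⟩ := hφ y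
    obtain ⟨i, c, rfl⟩ := 𝒞.exists_eq x
    exact ⟨i, c, rfl⟩

/-- The trivial cover of a one-element type. -/
def ofUnique [Preorder P] [Unique P] : ChainCover P where
  ι := Unit
  rank _ := 0
  chain _ := OrderHom.const _ default
  exists_eq _ := ⟨(), 0, Subsingleton.elim _ _⟩

theorem truncatedSize_ofUnique [Preorder P] [Unique P] :
    (ofUnique : ChainCover P).truncatedSize = symmClamp 1 := by
  ext h
  exact (Fintype.sum_unique fun _ : Unit => symmClamp ((0 : ℕ) + 1) h).trans (by simp)

/-- The product of `Fin (k + 1)` with a chain of rank `a` is a disjoint union of hooks of ranks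
`a + k - 2 * j`, for `j ≤ min a k`: the hook of index `j` first runs along the chain, up to rank
`a - j`, with first coordinate `j`, and then along `Fin (k + 1)`. -/
def finProd [Preorder P] (k : ℕ) (𝒞 : ChainCover P) : ChainCover (Fin (k + 1) × P) where
  ι := Σ i, Fin (min (𝒞.rank i + 1) (k + 1))
  rank q := 𝒞.rank q.1 + k - 2 * q.2
  chain q :=
    { toFun c := (⟨q.2 + (c - (𝒞.rank q.1 - q.2)), by omega⟩,
        𝒞.chain q.1 ⟨min c (𝒞.rank q.1 - q.2), by omega⟩)
      monotone' c d hcd := by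
        refine Prod.mk_le_mk.2 ⟨?_, (𝒞.chain q.1).monotone ?_⟩ <;>
        · rw [Fin.mk_le_mk]
          omega }
  exists_eq := by
    rintro ⟨⟨b, hb⟩, x⟩
    obtain ⟨i, ⟨a, ha⟩, rfl⟩ := 𝒞.exists_eq x
    obtain ⟨j, c, hj, hc, hb_eq, ha_eq⟩ : ∃ j c, j < min (𝒞.rank i + 1) (k + 1) ∧
        c < 𝒞.rank i + k - 2 * j + 1 ∧ j + (c - (𝒞.rank i - j)) = b ∧ min c (𝒞.rank i - j) = a := by
      by_cases hab : a + b ≤ 𝒞.rank i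
      · exact ⟨b, a, by omega⟩
      · exact ⟨𝒞.rank i - a, a + b - (𝒞.rank i - a), by omega⟩
    exact ⟨⟨i, j, hj⟩, ⟨c, hc⟩, Prod.ext (Fin.ext hb_eq) (congrArg (𝒞.chain i) (Fin.ext ha_eq))⟩

theorem truncatedSize_finProd [Preorder P] (k : ℕ) (𝒞 : ChainCover P) :
    (𝒞.finProd k).truncatedSize = (k + 1 : ℝ) • stepAverage k 𝒞.truncatedSize := by
  ext h
  calc (𝒞.finProd k).truncatedSize h
    _ = ∑ i, ∑ j : Fin (min (𝒞.rank i + 1) (k + 1)),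
          symmClamp h ((𝒞.rank i + 1 : ℕ) + k - 2 * j) := by
        rw [truncatedSize, finProd, Fintype.sum_sigma]
        refine sum_congr rfl fun i _ => sum_congr rfl fun j _ => ?_
        rw [symmClamp_comm]
        congr 1
        dsimp only
        omega
    _ = ∑ i, (k + 1) * stepAverage k (symmClamp (𝒞.rank i + 1)) h := by
        refine sum_congr rfl fun i _ => ?_
        rw [Fin.sum_univ_eq_sum_range (fun j : ℕ => symmClamp h ((𝒞.rank i + 1 : ℕ) + k - 2 * j)),
          sum_range_min_of_odd (odd_symmClamp h), stepAverage_symmClamp_comm]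
        push_cast
        rfl
    _ = (k + 1) * stepAverage k 𝒞.truncatedSize h := by
        simp only [← sum_range_eq_mul_stepAverage, truncatedSize]
        exact sum_comm

theorem truncatedSize_finProd_le [Preorder P] {𝒞 : ChainCover P} {n : ℝ} {N : ℕ} (hn : 0 ≤ n)
    (h𝒞 : ∀ h ≥ 0, 𝒞.truncatedSize h ≤ n * centralMass N h) (k : ℕ) :
    ∀ h ≥ 0, (𝒞.finProd k).truncatedSize h ≤ (k + 1) * n * centralMass (k + N) h := by
  intro h hh
  calc (𝒞.finProd k).truncatedSize h
    _ = (k + 1) * stepAverage k 𝒞.truncatedSize h := by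
        rw [truncatedSize_finProd, Pi.smul_apply, smul_eq_mul]
    _ ≤ (k + 1) * stepAverage k (n • centralMass N) h := by
        gcongr
        exact stepAverage_le_stepAverage 𝒞.odd_truncatedSize
          ((oddConcave_centralMass N).odd.const_smul n) h𝒞 k h hh
    _ = (k + 1) * n * stepAverage k (centralMass N) h := by
        rw [stepAverage_smul, Pi.smul_apply, smul_eq_mul, mul_assoc]
    _ ≤ (k + 1) * n * centralMass (k + N) h := by
        gcongr
        exact stepAverage_centralMass_le k N h hh

theorem exists_truncatedSize_pi_fin_le {ι : Type*} [Fintype ι] (k : ι → ℕ) :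
    ∃ 𝒞 : ChainCover (∀ i, Fin (k i + 1)),
      ∀ h ≥ 0, 𝒞.truncatedSize h ≤ (∏ i, (k i + 1 : ℝ)) * centralMass (∑ i, k i) h := by
  refine Fintype.induction_empty_option (P := fun ι _ => ∀ k : ι → ℕ,
    ∃ 𝒞 : ChainCover (∀ i, Fin (k i + 1)),
      ∀ h ≥ 0, 𝒞.truncatedSize h ≤ (∏ i, (k i + 1 : ℝ)) * centralMass (∑ i, k i) h)
    ?of_equiv ?empty ?option ι k
  case of_equiv =>
    intro α β _ e ih k
    let _ := Fintype.ofEquiv β e.symm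
    obtain ⟨𝒞, h𝒞⟩ := ih (k ∘ e)
    refine ⟨𝒞.map ⟨e.piCongrLeft fun b => Fin (k b + 1), fun x y hxy => ?_⟩
      (Equiv.surjective _), ?_⟩
    · exact e.forall_congr_right.1 fun a => by simpa using hxy a
    · rw [← e.prod_comp, ← e.sum_comp]
      exact h𝒞
  case empty =>
    refine fun k => ⟨ofUnique, fun h _ => ?_⟩
    simp [truncatedSize_ofUnique, centralMass]
  case option =>
    intro α _ ih k
    obtain ⟨𝒞, h𝒞⟩ := ih fun a => k (some a)
    let φ := (Equiv.piOptionEquivProd (β := fun o => Fin (k o + 1))).symm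
    refine ⟨(𝒞.finProd (k none)).map ⟨φ, fun x y hxy => ?_⟩ φ.surjective, ?_⟩
    · exact Option.forall.2 ⟨hxy.1, hxy.2⟩
    · rw [Fintype.prod_option, Fintype.sum_option]
      exact truncatedSize_finProd_le (by positivity) h𝒞 (k none)

end ChainCover

end ChainCover

section Antichain

variable {ι : Type*} [Fintype ι] {C : ι → Type*} [∀ i, Fintype (C i)]

theorem card_antichain_pi_le_choose [∀ i, LinearOrder (C i)] {k : ι → ℕ}
    (hk : ∀ i, Fintype.card (C i) = k i + 1) {A : Set (∀ i, C i)} (hA : IsAntichain (· ≤ ·) A) :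
    (Nat.card A : ℝ) ≤
      (∏ i, (Fintype.card (C i) : ℝ)) * ((∑ i, k i).choose ((∑ i, k i) / 2) / 2 ^ ∑ i, k i) := by
  obtain ⟨𝒞, h𝒞⟩ := ChainCover.exists_truncatedSize_pi_fin_le k
  let φ i := Fintype.orderIsoFinOfCardEq (C i) (hk i)
  let 𝒟 : ChainCover (∀ i, C i) := 𝒞.map
    ⟨fun x i => φ i (x i), fun x y hxy i => (φ i).monotone (hxy i)⟩
    fun y => ⟨fun i => (φ i).symm (y i), funext fun i => (φ i).apply_symm_apply (y i)⟩
  calc (Nat.card A : ℝ)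
    _ ≤ 𝒞.truncatedSize 1 := by
        rw [𝒞.truncatedSize_one]
        exact_mod_cast 𝒟.card_antichain_le hA
    _ ≤ _ := h𝒞 1 zero_le_one
    _ = _ := by
        rw [centralMass_one]
        simp only [hk]
        push_cast
        rfl

theorem card_antichain_pi_le_sqrt [∀ i, LinearOrder (C i)] [∀ i, Nonempty (C i)]
    {A : Set (∀ i, C i)} (hA : IsAntichain (· ≤ ·) A)
    (hrank : 0 < ∑ i, ((Fintype.card (C i) : ℝ) - 1)) :
    (Nat.card A : ℝ) ≤
      √(2 / π) * (∏ i, (Fintype.card (C i) : ℝ)) / √(∑ i, ((Fintype.card (C i) : ℝ) - 1)) := by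
  choose k hk using fun i => Nat.exists_eq_succ_of_ne_zero (Fintype.card_ne_zero (α := C i))
  have hsum : ∑ i, ((Fintype.card (C i) : ℝ) - 1) = (∑ i, k i : ℕ) := by simp [hk]
  rw [hsum] at hrank ⊢
  calc (Nat.card A : ℝ)
    _ ≤ (∏ i, (Fintype.card (C i) : ℝ)) * ((∑ i, k i).choose ((∑ i, k i) / 2) / 2 ^ ∑ i, k i) :=
        card_antichain_pi_le_choose hk hA
    _ ≤ (∏ i, (Fintype.card (C i) : ℝ)) * (√(2 / π) / √(∑ i, k i : ℕ)) := by
        refine mul_le_mul_of_nonneg_left ?_ (by positivity)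
        exact choose_half_div_two_pow_le (by exact_mod_cast hrank)
    _ = √(2 / π) * (∏ i, (Fintype.card (C i) : ℝ)) / √(∑ i, k i : ℕ) := by
        ring

theorem logb_two_le_sub_one {m : ℕ} (hm : m ≠ 0) : logb 2 m ≤ m - 1 := by
  obtain ⟨k, rfl⟩ := Nat.exists_eq_succ_of_ne_zero hm
  rw [logb_le_iff_le_rpow one_lt_two (by positivity), Nat.cast_succ, add_sub_cancel_right,
    rpow_natCast]
  exact_mod_cast Nat.succ_le_of_lt k.lt_two_pow_self

theorem logb_two_prod_le_sum_sub_one {ι : Type*} (s : Finset ι) {m : ι → ℕ}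
    (hm : ∀ i ∈ s, m i ≠ 0) : logb 2 (∏ i ∈ s, (m i : ℝ)) ≤ ∑ i ∈ s, ((m i : ℝ) - 1) := by
  rw [logb_prod _ _ fun i hi => Nat.cast_ne_zero.2 (hm i hi)]
  exact sum_le_sum fun i hi => logb_two_le_sub_one (hm i hi)

end Antichain

/-- Let `P` be a finite partially ordered set of cardinality `n ≥ 2` that is order-isomorphic
to the cartesian product (with componentwise order) of `t` chains `C 1, …, C t` (totally
ordered sets).  Then every antichain of `P` has cardinality at most `⌊b·n/√(log n)⌋`, where
`b = √(2/π)`.  Furthermore, if each of the `t` chains has the same cardinality `p`, then every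
antichain of `P` has cardinality at most `⌊b·p^t/√(t(p−1))⌋`. -/
theorem stmt_9 (P : Type*) [PartialOrder P] [Fintype P] (n : ℕ) (hn : 2 ≤ n)
    (hcard : Fintype.card P = n)
    (t : ℕ) (C : Fin t → Type*) [∀ i, LinearOrder (C i)] [∀ i, Fintype (C i)]
    (e : P ≃o ((i : Fin t) → C i))
    (A : Set P) (hA : IsAntichain (· ≤ ·) A) :
    Nat.card A ≤ ⌊Real.sqrt (2 / Real.pi) * n / Real.sqrt (Real.logb 2 n)⌋₊ ∧
    ∀ p : ℕ, (∀ i, Fintype.card (C i) = p) →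
      Nat.card A ≤
        ⌊Real.sqrt (2 / Real.pi) * (p : ℝ) ^ t / Real.sqrt (t * ((p : ℝ) - 1))⌋₊ := by
  have : Nonempty P := Fintype.card_pos_iff.1 (by omega)
  have hC (i) : Nonempty (C i) := ⟨e (Classical.arbitrary P) i⟩
  have hn_eq : (n : ℝ) = ∏ i, (Fintype.card (C i) : ℝ) := by
    rw [← hcard, Fintype.card_congr e.toEquiv, Fintype.card_pi, Nat.cast_prod]
  have hlog_le : logb 2 n ≤ ∑ i, ((Fintype.card (C i) : ℝ) - 1) :=
    hn_eq ▸ logb_two_prod_le_sum_sub_one univ fun i _ => Fintype.card_ne_zero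
  have hlog_pos : 0 < logb 2 n := logb_pos one_lt_two (by exact_mod_cast hn)
  have hbound : (Nat.card A : ℝ) ≤
      √(2 / π) * n / √(∑ i, ((Fintype.card (C i) : ℝ) - 1)) := by
    rw [← Nat.card_image_of_injective e.injective, hn_eq]
    exact card_antichain_pi_le_sqrt (hA.image_iso e) (hlog_pos.trans_le hlog_le)
  refine ⟨Nat.le_floor (hbound.trans ?_), fun p hp => Nat.le_floor (hbound.trans_eq ?_)⟩
  · gcongr
  · simp only [hn_eq, hp, prod_const, sum_const, card_univ, Fintype.card_fin, nsmul_eq_mul]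
end

section
/- For every positive integer K, the central binomial coefficient satisfies binom(K, ⌊K/2⌋) ≤ √(2/π)·2^K/√K. -/
/-!
The Wallis product is `W n = 16 ^ n / (C ^ 2 * (2 * n + 1))` with `C = n.centralBinom`, so its
lower bound `W n ≥ (2 * n + 1) / (2 * n + 2) * (π / 2)` is an upper bound for `C`, and
`4 * n * (n + 1) ≤ (2 * n + 1) ^ 2` brings it to the form `π * n * C ^ 2 ≤ 16 ^ n`. This is the
claim for `K = 2 * n`. For odd `K` it follows from that for `K + 1`, since then
`(K + 1).choose ((K + 1) / 2) = 2 * K.choose (K / 2)`.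
-/

open Real Real.Wallis

theorem factorial_two_mul_eq_centralBinom_mul (n : ℕ) :
    (2 * n).factorial = n.centralBinom * n.factorial ^ 2 := by
  rw [Nat.centralBinom_eq_two_mul_choose, two_mul, sq, ← mul_assoc,
    Nat.add_choose_mul_factorial_mul_factorial]

theorem centralBinom_succ_eq_two_mul_choose (n : ℕ) :
    (n + 1).centralBinom = 2 * (2 * n + 1).choose n := by
  rw [Nat.centralBinom_eq_two_mul_choose, mul_add_one, Nat.choose_succ_succ, Nat.choose_symm_half,
    ← two_mul]

theorem wallisW_eq_div_centralBinom_sq (n : ℕ) :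
    W n = 16 ^ n / ((n.centralBinom : ℝ) ^ 2 * (2 * n + 1)) := by
  have factorial_ne_zero : (n.factorial : ℝ) ≠ 0 := by positivity
  rw [W_eq_factorial_ratio, factorial_two_mul_eq_centralBinom_mul, pow_mul]
  push_cast
  field_simp
  norm_num

theorem pi_mul_centralBinom_sq_le (n : ℕ) :
    π * n * (n.centralBinom : ℝ) ^ 2 ≤ 16 ^ n := by
  have centralBinom_pos : (0 : ℝ) < n.centralBinom := mod_cast n.centralBinom_pos
  have wallis_bound :
      (2 * n + 1) / (2 * n + 2) * (π / 2) * ((n.centralBinom : ℝ) ^ 2 * (2 * n + 1)) ≤ 16 ^ n := by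
    rw [← le_div_iff₀ (by positivity), ← wallisW_eq_div_centralBinom_sq]
    exact le_W n
  have le_sq_div : (n : ℝ) ≤ (2 * n + 1) ^ 2 / (4 * (n + 1)) := by
    rw [le_div_iff₀ (by positivity)]
    linarith
  calc π * n * (n.centralBinom : ℝ) ^ 2
      ≤ π * ((2 * n + 1) ^ 2 / (4 * (n + 1))) * (n.centralBinom : ℝ) ^ 2 := by gcongr
    _ = (2 * n + 1) / (2 * n + 2) * (π / 2) * ((n.centralBinom : ℝ) ^ 2 * (2 * n + 1)) := by
        field_simp
        ring
    _ ≤ 16 ^ n := wallis_bound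

theorem pi_mul_choose_half_sq_le (K : ℕ) :
    π * K * (K.choose (K / 2) : ℝ) ^ 2 ≤ 2 * 4 ^ K := by
  obtain ⟨n, rfl | rfl⟩ := K.even_or_odd'
  · rw [Nat.mul_div_cancel_left n two_pos, ← Nat.centralBinom_eq_two_mul_choose]
    calc π * (2 * n : ℕ) * (n.centralBinom : ℝ) ^ 2
        = 2 * (π * n * (n.centralBinom : ℝ) ^ 2) := by push_cast; ring
      _ ≤ 2 * 16 ^ n := by gcongr; exact pi_mul_centralBinom_sq_le n
      _ = 2 * 4 ^ (2 * n) := by rw [pow_mul]; norm_num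
  · have centralBinom_eq : ((n + 1).centralBinom : ℝ) = 2 * (2 * n + 1).choose n :=
      mod_cast centralBinom_succ_eq_two_mul_choose n
    rw [show (2 * n + 1) / 2 = n by lia]
    calc π * (2 * n + 1 : ℕ) * ((2 * n + 1).choose n : ℝ) ^ 2
        ≤ π * (2 * (n + 1) : ℕ) * ((2 * n + 1).choose n : ℝ) ^ 2 := by gcongr; lia
      _ = π * (n + 1 : ℕ) * ((n + 1).centralBinom : ℝ) ^ 2 / 2 := by
          rw [centralBinom_eq]
          push_cast
          ring
      _ ≤ 16 ^ (n + 1) / 2 := by gcongr; exact pi_mul_centralBinom_sq_le (n + 1)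
      _ = 2 * 4 ^ (2 * n + 1) := by
          rw [pow_succ, pow_succ, pow_mul]
          norm_num
          ring

/-- For every positive integer `K`, the central binomial coefficient satisfies
`binom(K, ⌊K/2⌋) ≤ √(2/π)·2^K/√K`. -/
theorem stmt_10 (K : ℕ) (hK : 1 ≤ K) :
    (K.choose (K / 2) : ℝ) ≤ Real.sqrt (2 / Real.pi) * 2 ^ K / Real.sqrt K := by
  have K_pos : (0 : ℝ) < K := by exact_mod_cast hK
  refine le_of_sq_le_sq ?_ (by positivity)
  calc (K.choose (K / 2) : ℝ) ^ 2
      ≤ 2 * 4 ^ K / (π * K) := by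
        rw [le_div_iff₀' (by positivity)]
        exact pi_mul_choose_half_sq_le K
    _ = 2 / π * (2 ^ K) ^ 2 / K := by
        rw [pow_right_comm, div_mul_eq_mul_div, div_div]
        norm_num
    _ = (√(2 / π) * 2 ^ K / √K) ^ 2 := by
        rw [div_pow, mul_pow, sq_sqrt (by positivity), sq_sqrt K_pos.le]
end

section
/- Let G be a finite soluble group, H a subgroup of G of index n ≥ 2, F a field of characteristic p > 0, and V an H-module of finite dimension a over F. Let K := core_G(H), let r ≠ p be a prime, let P_r be a Sylow r-subgroup of G, and let χ₁ be the number of orbits of K ∩ P_r on the nonzero elements of V. Then for every submodule S of the induced module V↑G = F[G] ⊗_{F[H]} V, d_G(S) ≤ min{a, χ₁}·n_p. -/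
/-- `dMod G S` is `d_G(S)`: the minimal number of elements required to generate the
(`G`-stable) submodule `S` as a `G`-module. -/
noncomputable def dMod (G : Type*) [Group G] {F W : Type*} [Field F] [AddCommGroup W]
    [Module F W] [DistribMulAction G W] (S : Submodule F W) : ℕ :=
  sInf {m : ℕ | ∃ T : Finset W, T.card = m ∧ (T : Set W) ⊆ (S : Set W) ∧
    Submodule.span F {w : W | ∃ g : G, ∃ t ∈ T, w = g • t} = S}

/-!
Let `A` be a Hall `p'`-subgroup of `G`. By Maschke's theorem every `G`-submodule `S` of `W = V↑G`
is an `A`-equivariant image of `W`, so it is enough to generate `W` as an `A`-module.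

Let `R` be an `r`-subgroup of `K = core_G H`. As `r` does not divide the index of `A`, a Sylow
argument inside `K` provides representatives `x` of the double cosets `A x H` with
`x R x⁻¹ ≤ A`. If `T` generates `V` over `R`, then `x • T` generates `x • V` over `x R x⁻¹`, so the
sets `x • T` together generate `W` over `A`. Finally, the orbits of `A` on `G ⧸ H` have length
divisible by `|G : H| / gcd(|G : A|, |G : H|)`, so there are at most
`gcd(|G : A|, |G : H|)` double cosets, and this number is the `p`-part of `|G : H|`.
-/

/-- A Hall `π`-subgroup of a finite group: its order involves only primes in `π`, and its index
only primes outside `π`. -/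
structure IsHallSubgroup {G : Type*} [Group G] (π : Set ℕ) (A : Subgroup G) : Prop where
  mem_of_dvd_card : ∀ q, q.Prime → q ∣ Nat.card A → q ∈ π
  notMem_of_dvd_index : ∀ q, q.Prime → q ∣ A.index → q ∉ π

section HallSubgroups

theorem exists_normal_isMulCommutative_ne_bot (G : Type*) [Group G] [Group.IsSolvable G]
    [Nontrivial G] : ∃ D : Subgroup G, D.Normal ∧ IsMulCommutative D ∧ D ≠ ⊥ := by
  classical
  have hex : ∃ m, derivedSeries G m = ⊥ := Group.IsSolvable.solvable
  obtain ⟨m, hm⟩ : ∃ m, Nat.find hex = m + 1 :=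
    Nat.exists_eq_succ_of_ne_zero ((Nat.find_pos hex).mpr top_ne_bot).ne'
  refine ⟨derivedSeries G m, inferInstance, ?_, Nat.find_min hex (by omega)⟩
  have hbot := Nat.find_spec hex
  rwa [hm, derivedSeries_succ, Subgroup.commutator_eq_bot_iff_le_centralizer,
    Subgroup.le_centralizer_iff_isMulCommutative] at hbot

theorem exists_normal_isPGroup_ne_bot (G : Type*) [Group G] [Finite G] [Group.IsSolvable G]
    [Nontrivial G] :
    ∃ q, q.Prime ∧ ∃ N : Subgroup G, N.Normal ∧ IsPGroup q N ∧ N ≠ ⊥ := by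
  obtain ⟨D, hD, hDcomm, hDbot⟩ := exists_normal_isMulCommutative_ne_bot G
  obtain ⟨q, hq, hqD⟩ := Nat.exists_prime_and_dvd
    (Subgroup.one_lt_card_iff_ne_bot D |>.mpr hDbot).ne'
  have : Fact q.Prime := ⟨hq⟩
  obtain ⟨Q⟩ : Nonempty (Sylow q D) := inferInstance
  have : (Q : Subgroup D).Characteristic := Q.characteristic_of_normal inferInstance
  refine ⟨q, hq, (Q : Subgroup D).map D.subtype, ConjAct.normal_of_characteristic_of_normal,
    Q.isPGroup'.map _, fun hbot => Q.ne_bot_of_dvd_card hqD ?_⟩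
  exact (Subgroup.map_eq_bot_iff_of_injective _ D.subtype_injective).mp hbot

section Quotient

variable {G : Type*} [Group G] {π : Set ℕ} {N : Subgroup G} [N.Normal]

theorem card_subgroupOf_comap_mk' (B : Subgroup (G ⧸ N)) :
    Nat.card (N.subgroupOf (B.comap (QuotientGroup.mk' N))) = Nat.card N :=
  Nat.card_congr (Subgroup.subgroupOfEquivOfLe (QuotientGroup.le_comap_mk' N B)).toEquiv

theorem relIndex_comap_mk' (B : Subgroup (G ⧸ N)) :
    N.relIndex (B.comap (QuotientGroup.mk' N)) = Nat.card B := by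
  have := Subgroup.relIndex_ker (B.comap (QuotientGroup.mk' N)) (QuotientGroup.mk' N)
  rwa [QuotientGroup.ker_mk',
    Subgroup.map_comap_eq_self_of_surjective (QuotientGroup.mk'_surjective N)] at this

theorem index_comap_mk' (B : Subgroup (G ⧸ N)) :
    (B.comap (QuotientGroup.mk' N)).index = B.index :=
  B.index_comap_of_surjective (QuotientGroup.mk'_surjective N)

theorem IsHallSubgroup.comap_mk' {B : Subgroup (G ⧸ N)}
    (hN : ∀ q, q.Prime → q ∣ Nat.card N → q ∈ π) (hB : IsHallSubgroup π B) :
    IsHallSubgroup π (B.comap (QuotientGroup.mk' N)) where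
  mem_of_dvd_card q hq hdvd := by
    rw [← Subgroup.card_mul_index (N.subgroupOf (B.comap (QuotientGroup.mk' N))),
      card_subgroupOf_comap_mk', ← Subgroup.relIndex, relIndex_comap_mk', hq.dvd_mul] at hdvd
    exact hdvd.elim (hN q hq) (hB.mem_of_dvd_card q hq)
  notMem_of_dvd_index q hq hdvd := hB.notMem_of_dvd_index q hq (index_comap_mk' B ▸ hdvd)

/-- By Schur–Zassenhaus, `N` has a complement in the preimage of `B`. -/
theorem IsHallSubgroup.exists_of_quotient [Finite G] {B : Subgroup (G ⧸ N)}
    (hN : ∀ q, q.Prime → q ∣ Nat.card N → q ∉ π) (hB : IsHallSubgroup π B) :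
    ∃ A : Subgroup G, IsHallSubgroup π A := by
  set C := B.comap (QuotientGroup.mk' N)
  have hcop : (Nat.card (N.subgroupOf C)).Coprime (N.subgroupOf C).index := by
    rw [card_subgroupOf_comap_mk', ← Subgroup.relIndex, relIndex_comap_mk']
    exact Nat.coprime_of_dvd fun q hq hqN hqB => hN q hq hqN (hB.mem_of_dvd_card q hq hqB)
  obtain ⟨A, hA⟩ := Subgroup.exists_left_complement'_of_coprime hcop
  refine ⟨A.map C.subtype, fun q hq hdvd => hB.mem_of_dvd_card q hq ?_, fun q hq hdvd => ?_⟩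
  · rwa [Subgroup.card_subtype, ← hA.index_eq_card, ← Subgroup.relIndex, relIndex_comap_mk']
      at hdvd
  · rw [Subgroup.index_map_subtype, hA.symm.index_eq_card, card_subgroupOf_comap_mk',
      index_comap_mk', hq.dvd_mul] at hdvd
    exact hdvd.elim (hN q hq) (hB.notMem_of_dvd_index q hq)

end Quotient

theorem exists_isHallSubgroup.{u} (G : Type u) [Group G] [Finite G] [Group.IsSolvable G]
    (π : Set ℕ) : ∃ A : Subgroup G, IsHallSubgroup π A := by
  induction hc : Nat.card G using Nat.strong_induction_on generalizing G with
  | _ c ih =>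
  subst hc
  rcases subsingleton_or_nontrivial G with _ | _
  · exact ⟨⊤, fun q hq hdvd => by simp_all [hq.ne_one], fun q hq hdvd => by simp_all [hq.ne_one]⟩
  obtain ⟨p, hp, N, hN, hNp, hNbot⟩ := exists_normal_isPGroup_ne_bot G
  have hlt : Nat.card (G ⧸ N) < Nat.card G := by
    rw [Subgroup.card_eq_card_quotient_mul_card_subgroup N]
    exact lt_mul_of_one_lt_right Nat.card_pos (N.one_lt_card_iff_ne_bot.mpr hNbot)
  obtain ⟨B, hB⟩ := ih _ hlt (G ⧸ N) rfl
  have hprime : ∀ q, q.Prime → q ∣ Nat.card N → q = p := fun q hq hdvd => by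
    have : Fact p.Prime := ⟨hp⟩
    obtain ⟨k, hk⟩ := hNp.exists_card_eq
    exact (Nat.prime_dvd_prime_iff_eq hq hp).mp (hq.dvd_of_dvd_pow (hk ▸ hdvd))
  by_cases hpπ : p ∈ π
  · exact ⟨_, hB.comap_mk' fun q hq hdvd => hprime q hq hdvd ▸ hpπ⟩
  · exact hB.exists_of_quotient fun q hq hdvd => hprime q hq hdvd ▸ hpπ

theorem IsHallSubgroup.gcd_index_dvd {G : Type*} [Group G] {p n : ℕ} (hp : p.Prime)
    {A : Subgroup G} (hA : IsHallSubgroup {p}ᶜ A) (hn : n ≠ 0) :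
    A.index.gcd n ∣ p ^ n.factorization p := by
  have hunique : ∀ {q}, q.Prime → q ∣ A.index.gcd n → q = p := fun {q} hq hdvd =>
    not_not.mp (hA.notMem_of_dvd_index q hq (hdvd.trans (Nat.gcd_dvd_left _ _)))
  have hpow := Nat.eq_prime_pow_of_unique_prime_dvd (Nat.gcd_ne_zero_right hn) hunique
  rw [hpow]
  exact pow_dvd_pow p ((hp.pow_dvd_iff_le_factorization hn).mp (hpow ▸ Nat.gcd_dvd_right _ _))

end HallSubgroups

section Conjugation

variable {G : Type*} [Group G] {r : ℕ} [Fact r.Prime] {A R : Subgroup G}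

/-- A fixed point `g A` of `R` on `G ⧸ A` satisfies `g⁻¹ R g ≤ A`. -/
theorem exists_conj_mem_of_isPGroup (hR : IsPGroup r R) (hA : ¬ r ∣ A.index) :
    ∃ g : G, ∀ h ∈ R, g * h * g⁻¹ ∈ A := by
  obtain ⟨⟨g⟩, hg⟩ := hR.nonempty_fixed_point_of_prime_not_dvd_card (G ⧸ A) hA
  refine ⟨g⁻¹, fun h hh => ?_⟩
  have := QuotientGroup.eq.mp (hg ⟨h⁻¹, R.inv_mem hh⟩)
  simpa [mul_assoc] using this

/-- Enlarge `R` to a Sylow `r`-subgroup `Q` of `K` and choose `g` with `g Q g⁻¹ ≤ A`. By the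
Frattini argument `g⁻¹ x` is the product of an element normalizing `Q` and an element of `K`. -/
theorem exists_conj_mul_mem [Finite G] {K : Subgroup G} [K.Normal] (hRK : R ≤ K)
    (hR : IsPGroup r R) (hA : ¬ r ∣ A.index) (x : G) :
    ∃ k ∈ K, ∀ h ∈ R, (x * k) * h * (x * k)⁻¹ ∈ A := by
  obtain ⟨Q, hRQ⟩ := (hR.comap_subtype (K := K)).exists_le_sylow
  obtain ⟨g, hg⟩ := exists_conj_mem_of_isPGroup (Q.isPGroup'.map K.subtype) hA
  obtain ⟨m, hm, k, hk, hmk⟩ := Subgroup.mem_sup_of_normal_right.mp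
    (Q.normalizer_sup_eq_top ▸ Subgroup.mem_top (g⁻¹ * x))
  refine ⟨k⁻¹, K.inv_mem hk, fun h hh => ?_⟩
  have hhQ : h ∈ (Q : Subgroup K).map K.subtype := ⟨⟨h, hRK hh⟩, hRQ hh, rfl⟩
  have := hg _ ((Subgroup.mem_normalizer_iff.mp hm h).mp hhQ)
  rw [show x * k⁻¹ = g * m by rw [mul_inv_eq_iff_eq_mul, mul_assoc, hmk, mul_inv_cancel_left]]
  simpa [mul_assoc] using this

end Conjugation

section Orbits

open MulAction DoubleCoset

variable {G : Type*} [Group G]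

theorem card_dvd_card_orbit_mul_index {X : Type*} [MulAction G X] [IsPretransitive G X]
    (A : Subgroup G) (x : X) : Nat.card X ∣ Nat.card (orbit A x) * A.index := by
  have hle : (stabilizer A x).map A.subtype ≤ stabilizer G x := by
    rintro _ ⟨a, ha, rfl⟩
    exact ha
  have := Subgroup.index_dvd_of_le hle
  rwa [index_stabilizer_of_transitive, Subgroup.index_map_subtype, index_stabilizer] at this

theorem card_orbitRel_quotient_le_gcd {X : Type*} [Finite X] [MulAction G X] [IsPretransitive G X]
    (A : Subgroup G) : Nat.card (orbitRel.Quotient A X) ≤ A.index.gcd (Nat.card X) := by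
  rcases isEmpty_or_nonempty X with _ | _
  · simp
  have := Fintype.ofFinite (orbitRel.Quotient A X)
  set d := A.index.gcd (Nat.card X)
  have hX_le (x : X) : Nat.card X ≤ d * Nat.card (orbit A x) := by
    have : Nonempty (orbit A x) := ⟨⟨x, mem_orbit_self x⟩⟩
    have hd : 0 < d := Nat.gcd_pos_of_pos_right _ Nat.card_pos
    refine Nat.le_of_dvd (Nat.mul_pos hd Nat.card_pos) ?_
    have hdvd := card_dvd_card_orbit_mul_index A x
    rw [mul_comm] at hdvd
    simpa only [d, Nat.gcd_comm] using Nat.dvd_gcd_mul_iff_dvd_mul.mpr hdvd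
  refine Nat.le_of_mul_le_mul_right ?_ (Nat.card_pos (α := X))
  calc
    Nat.card (orbitRel.Quotient A X) * Nat.card X = ∑ _ω : orbitRel.Quotient A X, Nat.card X := by
      simp
    _ ≤ ∑ ω : orbitRel.Quotient A X, d * Nat.card (orbit A ω.out) :=
      Finset.sum_le_sum fun ω _ => hX_le ω.out
    _ = d * Nat.card X := by
      rw [← Finset.mul_sum, ← Nat.card_sigma, Nat.card_congr (selfEquivSigmaOrbits A X)]

theorem exists_doubleCoset_representatives [Finite G] (A H : Subgroup G) {P : G → Prop}
    (hP : ∀ x, ∃ h ∈ H, P (x * h)) :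
    ∃ X : Finset G, X.card ≤ A.index.gcd H.index ∧ (∀ x ∈ X, P x) ∧
      ∀ g, ∃ x ∈ X, g ∈ doubleCoset x A H := by
  classical
  choose k hkH hkP using hP
  have := Fintype.ofFinite (orbitRel.Quotient A (G ⧸ H))
  let rep (ω : orbitRel.Quotient A (G ⧸ H)) : G := ω.out.out * k ω.out.out
  refine ⟨Finset.univ.image rep, ?_, by simp [rep, hkP], fun g => ?_⟩
  · refine Finset.card_image_le.trans ?_
    rw [Finset.card_univ, ← Nat.card_eq_fintype_card]
    exact card_orbitRel_quotient_le_gcd A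
  · let ω : orbitRel.Quotient A (G ⧸ H) := Quotient.mk'' (g : G ⧸ H)
    obtain ⟨b, hb⟩ : (g : G ⧸ H) ∈ orbit A ω.out :=
      orbitRel_apply.mp (_root_.Quotient.exact (_root_.Quotient.out_eq ω).symm)
    refine ⟨rep ω, by simp, mem_doubleCoset.mpr ?_⟩
    have hbg : (((b : G) * ω.out.out : G) : G ⧸ H) = (g : G ⧸ H) := by
      rw [← hb]
      exact MulAction.Quotient.mk_smul_out (H := H) (b : G) ω.out
    refine ⟨b, b.2, _, H.mul_mem (H.inv_mem (hkH ω.out.out)) (QuotientGroup.eq.mp hbg), ?_⟩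
    simp [rep, mul_assoc]

end Orbits

/-- The `F`-span of the `G`-orbits of the elements of `T`; for an `F`-linear action of a group
this is the `G`-submodule generated by `T`. -/
def orbitSpan (G F : Type*) {W : Type*} [SMul G W] [Semiring F] [AddCommMonoid W] [Module F W]
    (T : Set W) : Submodule F W :=
  Submodule.span F {w | ∃ g : G, ∃ t ∈ T, w = g • t}

section OrbitSpan

open DoubleCoset
open scoped Pointwise

variable {G F W : Type*} [Semiring F] [AddCommMonoid W] [Module F W]

theorem smul_mem_orbitSpan [SMul G W] (g : G) {T : Set W} {t : W} (ht : t ∈ T) :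
    g • t ∈ orbitSpan G F T :=
  Submodule.subset_span ⟨g, t, ht, rfl⟩

theorem subset_orbitSpan [Monoid G] [MulAction G W] (T : Set W) :
    T ⊆ (orbitSpan G F T : Set W) := fun t ht => by
  simpa using smul_mem_orbitSpan (F := F) (1 : G) ht

theorem orbitSpan_le [SMul G W] {T : Set W} {S : Submodule F W} :
    orbitSpan G F T ≤ S ↔ ∀ g : G, ∀ t ∈ T, g • t ∈ S := by
  rw [orbitSpan, Submodule.span_le]
  exact ⟨fun h g t ht => h ⟨g, t, ht, rfl⟩, fun h w ⟨g, t, ht, hw⟩ => hw ▸ h g t ht⟩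

theorem map_orbitSpan [SMul G W] {f : W →ₗ[F] W} (hf : ∀ (g : G) w, f (g • w) = g • f w)
    (T : Set W) : (orbitSpan G F T).map f = orbitSpan G F (f '' T) := by
  refine le_antisymm (Submodule.map_le_iff_le_comap.mpr (orbitSpan_le.mpr fun g t ht => ?_))
    (orbitSpan_le.mpr ?_)
  · rw [Submodule.mem_comap, hf]
    exact smul_mem_orbitSpan g (Set.mem_image_of_mem f ht)
  · rintro g _ ⟨t, ht, rfl⟩
    exact hf g t ▸ Submodule.mem_map_of_mem (smul_mem_orbitSpan g ht)

theorem orbitSpan_subgroup_le [Group G] [MulAction G W] (A : Subgroup G) (T : Set W) :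
    orbitSpan A F T ≤ orbitSpan G F T :=
  orbitSpan_le.mpr fun a _ ht => smul_mem_orbitSpan (a : G) ht

variable (F) in
theorem exists_finset_card_eq_card_orbits_subset_orbitSpan [Group G] [MulAction G W] {V : Set W}
    (hfin : (MulAction.orbit G '' (V \ {0})).Finite) :
    ∃ T : Finset W, T.card = Nat.card (MulAction.orbit G '' (V \ {0})) ∧
      V ⊆ orbitSpan G F (T : Set W) := by
  obtain ⟨T, -, hT⟩ := Set.exists_subset_bijOn (V \ {0}) (MulAction.orbit G)
  have hTfin : T.Finite := Set.Finite.of_finite_image (hT.image_eq ▸ hfin) hT.injOn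
  refine ⟨hTfin.toFinset, ?_, fun v hv => ?_⟩
  · rw [← Set.ncard_eq_toFinset_card _ hTfin]
    exact Nat.card_congr hT.equiv
  · rcases eq_or_ne v 0 with rfl | hv0
    · exact Submodule.zero_mem _
    · obtain ⟨t, ht, hvt⟩ := hT.surjOn ⟨v, ⟨hv, hv0⟩, rfl⟩
      obtain ⟨g, rfl⟩ : v ∈ MulAction.orbit G t := hvt ▸ MulAction.mem_orbit_self v
      exact smul_mem_orbitSpan g (by simpa using ht)

theorem orbitSpan_smul_eq_top [Group G] [DistribMulAction G W] [SMulCommClass G F W]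
    {A H R : Subgroup G} {V : Submodule F W}
    (hV : ∀ g ∈ H, ∀ v ∈ V, g • v ∈ V)
    (hW : ⨆ g : G, V.map (DistribSMul.toLinearMap F W g) = ⊤)
    {T : Set W} (hT : V ≤ orbitSpan R F T) {X : Set G}
    (hXR : ∀ x ∈ X, ∀ h ∈ R, x * h * x⁻¹ ∈ A) (hX : ∀ g, ∃ x ∈ X, g ∈ doubleCoset x A H) :
    orbitSpan A F (X • T) = ⊤ := by
  have smul_mem (a : A) {x : G} (hx : x ∈ X) {v : W} (hv : v ∈ V) :
      (a * x : G) • v ∈ orbitSpan A F (X • T) := by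
    suffices orbitSpan R F T ≤
        (orbitSpan A F (X • T)).comap (DistribSMul.toLinearMap F W (a * x : G)) from this (hT hv)
    refine orbitSpan_le.mpr fun h t ht => ?_
    have hconj : (a * x : G) • h • t = (a * ⟨x * h * x⁻¹, hXR x hx h h.2⟩ : A) • x • t := by
      simp [Subgroup.smul_def, smul_smul, mul_assoc]
    rw [Submodule.mem_comap, DistribSMul.toLinearMap_apply, hconj]
    exact smul_mem_orbitSpan _ (Set.smul_mem_smul hx ht)
  rw [eq_top_iff, ← hW]
  refine iSup_le fun g => Submodule.map_le_iff_le_comap.mpr fun v hv => ?_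
  obtain ⟨x, hx, hgx⟩ := hX g
  obtain ⟨a, ha, h, hh, rfl⟩ := mem_doubleCoset.mp hgx
  simpa [mul_smul] using smul_mem ⟨a, ha⟩ hx (hV h hh v hv)

end OrbitSpan

theorem exists_finset_card_eq_finrank_le_orbitSpan (G : Type*) {F W : Type*} [Monoid G]
    [DivisionRing F] [AddCommGroup W] [Module F W] [MulAction G W] (V : Submodule F W)
    [FiniteDimensional F V] :
    ∃ T : Finset W, T.card = Module.finrank F V ∧ V ≤ orbitSpan G F (T : Set W) := by
  have : Module.Finite F (Submodule.span F (V : Set W)) := by rwa [Submodule.span_eq]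
  obtain ⟨T, -, hcard, hspan, -⟩ := Submodule.exists_finset_span_eq_linearIndepOn F (V : Set W)
  rw [Submodule.span_eq] at hcard hspan
  exact ⟨T, hcard, hspan ▸ Submodule.span_le.mpr (subset_orbitSpan _)⟩

section Generators

open scoped Pointwise

variable {G F W : Type*} [Group G] [Field F] [AddCommGroup W] [Module F W] [DistribMulAction G W]

theorem dMod_le_card_of_orbitSpan_eq {T : Finset W} {S : Submodule F W}
    (hT : orbitSpan G F (T : Set W) = S) : dMod G S ≤ T.card :=
  Nat.sInf_le ⟨T, rfl, hT ▸ subset_orbitSpan _, hT⟩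

variable [SMulCommClass G F W]

theorem exists_isProj_equivariant [Finite G] (hG : (Nat.card G : F) ≠ 0) {S : Submodule F W}
    (hS : ∀ g : G, ∀ w ∈ S, g • w ∈ S) :
    ∃ f : W →ₗ[F] W, LinearMap.IsProj S f ∧ ∀ (g : G) w, f (g • w) = g • f w := by
  have : NeZero (Nat.card G : F) := ⟨hG⟩
  let ρ := Representation.ofDistribMulAction F G W
  let σ : Subrepresentation ρ := ⟨S, fun g w hw => hS g w hw⟩
  obtain ⟨τ, hστ⟩ := exists_isCompl σ
  have hcompl : IsCompl S τ.toSubmodule := by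
    rw [isCompl_iff, disjoint_iff, codisjoint_iff] at hστ ⊢
    exact hστ.imp (congrArg Subrepresentation.toSubmodule) (congrArg Subrepresentation.toSubmodule)
  have hproj : LinearMap.IsProj S (S.projection _ hcompl) :=
    ⟨Submodule.projection_apply_mem hcompl,
      fun w hw => Submodule.projection_apply_left hcompl ⟨w, hw⟩⟩
  refine ⟨_, hproj, fun g w => ?_⟩
  have hcomm : Commute (S.projection _ hcompl) (ρ g) := by
    rw [LinearMap.IsIdempotentElem.commute_iff (Submodule.isIdempotentElem_projection hcompl),
      Submodule.range_projection, Submodule.ker_projection]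
    exact ⟨hS g, τ.apply_mem_toSubmodule g⟩
  exact LinearMap.congr_fun hcomm w

theorem dMod_le_card_of_orbitSpan_eq_top {A : Subgroup G} [Finite A] (hA : (Nat.card A : F) ≠ 0)
    {U : Finset W} (hU : orbitSpan A F (U : Set W) = ⊤) {S : Submodule F W}
    (hS : ∀ g : G, ∀ w ∈ S, g • w ∈ S) : dMod G S ≤ U.card := by
  classical
  obtain ⟨f, hfS, hf⟩ := exists_isProj_equivariant hA fun (a : A) => hS a
  have hAspan : orbitSpan A F (f '' U) = S := by
    rw [← map_orbitSpan hf, hU, Submodule.map_top, hfS.range]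
  have hGspan : orbitSpan G F (f '' U) = S := by
    refine le_antisymm (orbitSpan_le.mpr ?_) (hAspan.ge.trans (orbitSpan_subgroup_le A _))
    rintro g _ ⟨u, -, rfl⟩
    exact hS g _ (hfS.map_mem u)
  rw [← Finset.coe_image] at hGspan
  exact (dMod_le_card_of_orbitSpan_eq hGspan).trans Finset.card_image_le

theorem dMod_le_card_mul_gcd [Finite G] {A H R : Subgroup G} (hA : (Nat.card A : F) ≠ 0)
    {r : ℕ} [Fact r.Prime] (hrA : ¬ r ∣ A.index) (hR : IsPGroup r R) (hRH : R ≤ H.normalCore)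
    {V : Submodule F W} (hV : ∀ g ∈ H, ∀ v ∈ V, g • v ∈ V)
    (hW : ⨆ g : G, V.map (DistribSMul.toLinearMap F W g) = ⊤)
    {T : Finset W} (hT : V ≤ orbitSpan R F (T : Set W))
    {S : Submodule F W} (hS : ∀ g : G, ∀ w ∈ S, g • w ∈ S) :
    dMod G S ≤ T.card * A.index.gcd H.index := by
  classical
  obtain ⟨X, hXcard, hXR, hX⟩ := exists_doubleCoset_representatives A H
    (P := fun x => ∀ h ∈ R, x * h * x⁻¹ ∈ A) fun x =>
      (exists_conj_mul_mem hRH hR hrA x).imp fun _ hk => hk.imp_left (H.normalCore_le ·)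
  have hspan : orbitSpan A F ((X • T : Finset W) : Set W) = ⊤ := by
    rw [Finset.coe_smul]
    exact orbitSpan_smul_eq_top hV hW hT hXR hX
  calc
    dMod G S ≤ (X • T).card := dMod_le_card_of_orbitSpan_eq_top hA hspan hS
    _ ≤ X.card * T.card := Finset.card_smul_le
    _ ≤ T.card * A.index.gcd H.index := by
      rw [mul_comm]
      exact Nat.mul_le_mul_left _ hXcard

theorem stmt_12_general [Finite G] {A H R : Subgroup G} (hA : (Nat.card A : F) ≠ 0)
    {r : ℕ} [Fact r.Prime] (hrA : ¬ r ∣ A.index) (hR : IsPGroup r R) (hRH : R ≤ H.normalCore)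
    {V : Submodule F W} [FiniteDimensional F V] (hV : ∀ g ∈ H, ∀ v ∈ V, g • v ∈ V)
    (hW : ⨆ g : G, V.map (DistribSMul.toLinearMap F W g) = ⊤)
    {S : Submodule F W} (hS : ∀ g : G, ∀ w ∈ S, g • w ∈ S) :
    ((MulAction.orbit R '' ((V : Set W) \ {0})).Finite →
      dMod G S ≤ min (Module.finrank F V) (Nat.card (MulAction.orbit R '' ((V : Set W) \ {0}))) *
        A.index.gcd H.index) ∧
      dMod G S ≤ Module.finrank F V * A.index.gcd H.index := by
  have hdim : dMod G S ≤ Module.finrank F V * A.index.gcd H.index := by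
    obtain ⟨T, hcard, hT⟩ := exists_finset_card_eq_finrank_le_orbitSpan R V
    exact hcard ▸ dMod_le_card_mul_gcd hA hrA hR hRH hV hW hT hS
  refine ⟨fun hfin => ?_, hdim⟩
  obtain ⟨T, hcard, hT⟩ := exists_finset_card_eq_card_orbits_subset_orbitSpan F hfin
  rw [← Nat.mul_min_mul_right]
  exact le_min hdim (hcard ▸ dMod_le_card_mul_gcd hA hrA hR hRH hV hW hT hS)

end Generators

theorem iSup_map_toLinearMap_eq_top {G F W : Type*} [Group G] [Semiring F]
    [AddCommMonoid W] [Module F W] [DistribMulAction G W] [SMulCommClass G F W] {H : Subgroup G}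
    {V : Submodule F W} {φ : G ⧸ H → Submodule F W}
    (hφ : ∀ g : G, φ (g : G ⧸ H) = V.map (DistribSMul.toLinearMap F W g)) (htop : iSup φ = ⊤) :
    ⨆ g : G, V.map (DistribSMul.toLinearMap F W g) = ⊤ := by
  simp_rw [← hφ]
  rw [← htop]
  exact QuotientGroup.mk_surjective.iSup_comp φ

theorem orbit_subgroup_eq_setOf {G W : Type*} [Group G] [MulAction G W] (R : Subgroup G) (v : W) :
    MulAction.orbit R v = {w | ∃ g ∈ R, g • v = w} := by
  ext w
  simp [MulAction.mem_orbit_iff, Subgroup.smul_def]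

/-- Let `G` be a finite soluble group, `H ≤ G` of index `n ≥ 2`, `F` a field of characteristic
`p > 0`, and `V` an `H`-module of finite dimension `a` over `F`.  The induced module `V↑G` is
presented internally: `W` is a `G`-module containing an `H`-stable subspace `V` of dimension
`a` such that `W` is the direct sum of the translates `g • V` over the cosets `g H ∈ G ⧸ H`.
Let `K = core_G H`, let `r ≠ p` be a prime, `P_r` a Sylow `r`-subgroup of `G`, and `χ₁` the
number of orbits of `K ∩ P_r` on the nonzero elements of `V`.  Then for every (`G`-stable)
submodule `S` of `W`, `d_G(S) ≤ min{a,χ₁}·n_p`; the bound with `min{a,χ₁}` replaced by `a`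
holds without finiteness assumptions on the set of orbits. -/
theorem stmt_12 (G : Type*) [Group G] [Fintype G] (hsol : IsSolvable G)
    (H : Subgroup G) (n : ℕ) (hn : 2 ≤ n) (hidx : H.index = n)
    (F W : Type*) [Field F] (p : ℕ) [Fact p.Prime] (hchar : CharP F p)
    [AddCommGroup W] [Module F W] [DistribMulAction G W] [SMulCommClass G F W]
    (V : Submodule F W) [FiniteDimensional F V] (a : ℕ) (ha : Module.finrank F V = a)
    (hVstable : ∀ g ∈ H, ∀ v ∈ V, g • v ∈ V)
    (hinduced : ∃ φ : G ⧸ H → Submodule F W,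
      (∀ g : G, φ (g : G ⧸ H) = V.map (DistribMulAction.toLinearMap F W g)) ∧
        iSupIndep φ ∧ iSup φ = ⊤)
    (r : ℕ) (hr : r.Prime) (hrp : r ≠ p) (Pr : Sylow r G)
    (orbs : Set (Set W))
    (horbs : orbs = {s : Set W | ∃ v ∈ (V : Set W), v ≠ 0 ∧
      s = {w : W | ∃ g ∈ H.normalCore ⊓ (Pr : Subgroup G), g • v = w}})
    (χ₁ : ℕ) (hχ₁ : χ₁ = Nat.card orbs)
    (S : Submodule F W) (hSstable : ∀ g : G, ∀ w ∈ S, g • w ∈ S) :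
    (orbs.Finite → dMod G S ≤ min a χ₁ * p ^ n.factorization p) ∧
      dMod G S ≤ a * p ^ n.factorization p := by
  have : Group.IsSolvable G := hsol
  have : Fact r.Prime := ⟨hr⟩
  subst hidx ha hχ₁
  obtain ⟨A, hA⟩ := exists_isHallSubgroup G {p}ᶜ
  have hpA : (Nat.card A : F) ≠ 0 := fun h =>
    hA.mem_of_dvd_card p Fact.out ((CharP.cast_eq_zero_iff F p _).mp h) rfl
  have hrA : ¬ r ∣ A.index := fun h => hA.notMem_of_dvd_index r hr h hrp
  have horbits :
      orbs = MulAction.orbit ↥(H.normalCore ⊓ (Pr : Subgroup G)) '' ((V : Set W) \ {0}) := by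
    rw [horbs]
    ext s
    simp [orbit_subgroup_eq_setOf, and_assoc, eq_comm]
  have hgcd : A.index.gcd H.index ≤ p ^ H.index.factorization p :=
    Nat.le_of_dvd (pow_pos (Fact.out : p.Prime).pos _) (hA.gcd_index_dvd Fact.out (by omega))
  obtain ⟨φ, hφ, -, hφtop⟩ := hinduced
  obtain ⟨hmin, hdim⟩ := stmt_12_general hpA hrA (Pr.isPGroup'.to_le inf_le_right) inf_le_left
    hVstable (iSup_map_toLinearMap_eq_top hφ hφtop) hSstable
  rw [horbits]
  exact ⟨fun hfin => (hmin hfin).trans (Nat.mul_le_mul_left _ hgcd),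
    hdim.trans (Nat.mul_le_mul_left _ hgcd)⟩
end

section
/- Let G be a finite group, H a subgroup of G of index n ≥ 2, F a field of characteristic p > 0, and V an H-module of finite dimension a over F. Let K := core_G(H), let r ≠ p be a prime, let P_r be a Sylow r-subgroup of G, and let χ₁ be the number of orbits of K ∩ P_r on the nonzero elements of V. Then for every submodule S of the induced module V↑G = F[G] ⊗_{F[H]} V, d_G(S) ≤ min{a, χ₁}·n/n_r. -/
/-!
If `S` is stable under the Sylow subgroup `P`, then Maschke's theorem makes `S` a direct summand of
`W` as a `P`-module, so `S` needs no more generators over `P` than `W` does. Write `K = core_G H`.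
By the Frattini argument every coset of `H` has a representative normalizing `K ∩ P`, and such a
representative `x` carries generators of `V` over `K ∩ P` to generators of `x V` over `K ∩ P`.
Hence `W` is generated over `P` by one translate of a `K ∩ P`-generating set of `V` for each
`P`-orbit on `G ⧸ H`. Each orbit has size divisible by `n_r`, so there are at most `n / n_r` of
them.
-/

open MulAction Module
open scoped Pointwise

section GroupSpan

/-- The `G`-submodule generated by a set `T`, as an `F`-subspace; the spanning set has the shape
used in `dMod`. -/
def groupSpan (F G : Type*) {W : Type*} [Semiring F] [AddCommMonoid W] [Module F W] [SMul G W]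
    (T : Set W) : Submodule F W :=
  Submodule.span F {w : W | ∃ g : G, ∃ t ∈ T, w = g • t}

section Monoid

variable {F G W : Type*} [Semiring F] [Monoid G] [AddCommMonoid W] [Module F W]
  [DistribMulAction G W] {S : Submodule F W} {T : Set W}

lemma groupSpan_le : groupSpan F G T ≤ S ↔ ∀ g : G, ∀ t ∈ T, g • t ∈ S := by
  rw [groupSpan, Submodule.span_le]
  exact ⟨fun h g t ht => h ⟨g, t, ht, rfl⟩, by rintro h _ ⟨g, t, ht, rfl⟩; exact h g t ht⟩

lemma smul_mem_groupSpan (g : G) {t : W} (ht : t ∈ T) : g • t ∈ groupSpan F G T :=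
  Submodule.subset_span ⟨g, t, ht, rfl⟩

lemma subset_groupSpan : T ⊆ groupSpan F G T :=
  fun t ht => one_smul G t ▸ smul_mem_groupSpan (1 : G) ht

lemma span_le_groupSpan : Submodule.span F T ≤ groupSpan F G T :=
  Submodule.span_le.mpr subset_groupSpan

lemma map_groupSpan (f : W →ₗ[F] W) (hf : ∀ (g : G) (w : W), f (g • w) = g • f w) :
    (groupSpan F G T).map f = groupSpan F G (f '' T) := by
  refine le_antisymm ?_ (groupSpan_le.mpr ?_)
  · rw [Submodule.map_le_iff_le_comap, groupSpan_le]
    intro g t ht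
    rw [Submodule.mem_comap, hf]
    exact smul_mem_groupSpan g (Set.mem_image_of_mem f ht)
  · rintro g _ ⟨t, ht, rfl⟩
    exact ⟨g • t, smul_mem_groupSpan g ht, hf g t⟩

lemma groupSpan_coe_eq_iSup_map [SMulCommClass G F W] (V : Submodule F W) :
    groupSpan F G (V : Set W) = ⨆ g : G, V.map (DistribSMul.toLinearMap F W g) := by
  refine le_antisymm (groupSpan_le.mpr fun g v hv => ?_) (iSup_le fun g => ?_)
  · exact Submodule.mem_iSup_of_mem g (Submodule.mem_map_of_mem hv)
  · rw [Submodule.map_le_iff_le_comap]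
    exact fun v hv => smul_mem_groupSpan g hv

lemma finite_of_groupSpan_eq_top [Finite G] [SMulCommClass G F W] {V : Submodule F W}
    [Module.Finite F V] (hV : groupSpan F G (V : Set W) = ⊤) : Module.Finite F W := by
  rw [groupSpan_coe_eq_iSup_map] at hV
  exact Module.finite_def.mpr
    (hV ▸ Submodule.fg_iSup _ fun g => (Module.Finite.iff_fg.mp ‹_›).map _)

end Monoid

lemma groupSpan_coe_eq_top_of_iSup_cosets_eq_top {F G W : Type*} [Semiring F] [Group G]
    [AddCommMonoid W] [Module F W] [DistribMulAction G W] [SMulCommClass G F W]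
    {H : Subgroup G} {V : Submodule F W} {φ : G ⧸ H → Submodule F W}
    (hφ : ∀ g : G, φ g = V.map (DistribSMul.toLinearMap F W g)) (hsup : iSup φ = ⊤) :
    groupSpan F G (V : Set W) = ⊤ := by
  rw [groupSpan_coe_eq_iSup_map, ← hsup, ← QuotientGroup.mk_surjective.iSup_comp]
  exact iSup_congr fun g => (hφ g).symm

lemma projection_smul_of_stable {F G W : Type*} [Ring F] [Monoid G] [AddCommGroup W]
    [Module F W] [DistribMulAction G W] {S C : Submodule F W} (hSC : IsCompl S C)
    (hS : ∀ g : G, ∀ w ∈ S, g • w ∈ S) (hC : ∀ g : G, ∀ w ∈ C, g • w ∈ C) (g : G) (w : W) :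
    S.projection C hSC (g • w) = g • S.projection C hSC w := by
  nth_rewrite 1 [← Submodule.projection_add_projection_eq_self hSC w]
  rw [smul_add, map_add,
    Submodule.projection_apply_of_mem_left hSC (hS g _ (Submodule.projection_apply_mem hSC w)),
    Submodule.projection_apply_of_mem_right hSC
      (hC g _ (Submodule.projection_apply_mem hSC.symm w)), add_zero]

section Group

variable {F G W : Type*} [Field F] [Group G] [AddCommGroup W] [Module F W]
  [DistribMulAction G W] {S : Submodule F W}

lemma dMod_le_card {T : Finset W} (hT : groupSpan F G (T : Set W) = S) : dMod G S ≤ T.card :=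
  Nat.sInf_le ⟨T, rfl, hT ▸ subset_groupSpan, hT⟩

-- Finite generation keeps `dMod` away from the junk value `sInf ∅ = 0`.
lemma exists_groupSpan_eq_card_eq_dMod (hS : ∀ g : G, ∀ w ∈ S, g • w ∈ S) (hfg : S.FG) :
    ∃ T : Finset W, groupSpan F G (T : Set W) = S ∧ T.card = dMod G S := by
  obtain ⟨B, hB⟩ := hfg
  have hBS : (B : Set W) ⊆ S := hB ▸ Submodule.subset_span
  have hspan : groupSpan F G (B : Set W) = S :=
    le_antisymm (groupSpan_le.mpr fun g b hb => hS g b (hBS hb)) (hB ▸ span_le_groupSpan)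
  have hne : {m : ℕ | ∃ T : Finset W, T.card = m ∧ (T : Set W) ⊆ S ∧
      groupSpan F G (T : Set W) = S}.Nonempty := ⟨B.card, B, rfl, hBS, hspan⟩
  obtain ⟨T, hcard, -, hT⟩ := Nat.sInf_mem hne
  exact ⟨T, hT, hcard⟩

lemma dMod_le_dMod_subgroup (P : Subgroup G) (hS : ∀ g : G, ∀ w ∈ S, g • w ∈ S) (hfg : S.FG) :
    dMod G S ≤ dMod P S := by
  obtain ⟨T, hT, hcard⟩ := exists_groupSpan_eq_card_eq_dMod (G := P) (fun g => hS g) hfg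
  have hTS : (T : Set W) ⊆ S := hT ▸ subset_groupSpan
  refine hcard ▸ dMod_le_card (le_antisymm ?_ ?_)
  · exact groupSpan_le.mpr fun g t ht => hS g t (hTS ht)
  · exact hT ▸ groupSpan_le.mpr fun g t ht => smul_mem_groupSpan (g : G) ht

lemma dMod_le_card_of_groupSpan_eq_top [SMulCommClass G F W]
    [(Representation.ofDistribMulAction F G W).IsSemisimpleRepresentation]
    (hS : ∀ g : G, ∀ w ∈ S, g • w ∈ S) {T : Finset W} (hT : groupSpan F G (T : Set W) = ⊤) :
    dMod G S ≤ T.card := by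
  classical
  obtain ⟨C, hSC⟩ := exists_isCompl
    (⟨S, hS⟩ : Subrepresentation (Representation.ofDistribMulAction F G W))
  have hcompl : IsCompl S C.toSubmodule :=
    .of_eq (congrArg Subrepresentation.toSubmodule hSC.inf_eq_bot)
      (congrArg Subrepresentation.toSubmodule hSC.sup_eq_top)
  let π := S.projection C.toSubmodule hcompl
  have hπ : groupSpan F G (π '' T) = S := by
    rw [← map_groupSpan π (projection_smul_of_stable hcompl hS C.apply_mem_toSubmodule), hT,
      Submodule.map_top, Submodule.range_projection]
  rw [← Finset.coe_image] at hπ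
  exact (dMod_le_card hπ).trans Finset.card_image_le

end Group

end GroupSpan

section Sylow

variable {G : Type*} [Group G] {r : ℕ} [Fact r.Prime]

lemma ordProj_card_dvd_card_orbit_sylow {X : Type*} [MulAction G X] [IsPretransitive G X]
    (P : Sylow r G) [P.FiniteIndex] (x : X) :
    ordProj[r] (Nat.card X) ∣ Nat.card (orbit P x) := by
  have hX : (stabilizer G x).index = Nat.card X := index_stabilizer_of_transitive G x
  have horbit : Nat.card (orbit P x) = (stabilizer G x).relIndex P := by
    rw [Nat.card_coe_set_eq, ← index_stabilizer]
    rfl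
  have hmul : Nat.card (orbit P x) * (P : Subgroup G).index = (stabilizer G x ⊓ P).index := by
    rw [horbit, ← Subgroup.inf_relIndex_right, Subgroup.relIndex_mul_index inf_le_right]
  have hcoprime : r.Coprime (P : Subgroup G).index :=
    (Fact.out : r.Prime).coprime_iff_not_dvd.mpr P.not_dvd_index
  refine (hcoprime.pow_left _).dvd_of_dvd_mul_right ?_
  rw [hmul, ← hX]
  exact (Nat.ordProj_dvd _ _).trans (Subgroup.index_dvd_of_le inf_le_left)

lemma card_orbitRel_quotient_sylow_le {X : Type*} [Finite X] [MulAction G X]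
    [IsPretransitive G X] (P : Sylow r G) [P.FiniteIndex] :
    Nat.card (orbitRel.Quotient P X) ≤ ordCompl[r] (Nat.card X) := by
  have := Fintype.ofFinite (orbitRel.Quotient P X)
  have hle (ω : orbitRel.Quotient P X) : ordProj[r] (Nat.card X) ≤ Nat.card ω.orbit := by
    induction ω using Quotient.inductionOn' with | _ x => ?_
    have : Nonempty (orbit P x) := ⟨⟨x, mem_orbit_self x⟩⟩
    rw [orbitRel.Quotient.orbit_mk]
    exact Nat.le_of_dvd Nat.card_pos (ordProj_card_dvd_card_orbit_sylow P x)
  rw [Nat.le_div_iff_mul_le (Nat.ordProj_pos _ _)]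
  calc Nat.card (orbitRel.Quotient P X) * ordProj[r] (Nat.card X)
      = ∑ _ω : orbitRel.Quotient P X, ordProj[r] (Nat.card X) := by
        rw [Finset.sum_const, Finset.card_univ, Nat.card_eq_fintype_card, smul_eq_mul]
    _ ≤ ∑ ω : orbitRel.Quotient P X, Nat.card ω.orbit := Finset.sum_le_sum fun ω _ => hle ω
    _ = Nat.card X := by
        rw [← Nat.card_sigma, Nat.card_congr (selfEquivSigmaOrbits' P X)]

lemma relIndex_dvd_index_of_normal_right [Finite G] (P N : Subgroup G) [N.Normal] :
    P.relIndex N ∣ P.index := by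
  obtain ⟨q, hq⟩ := N.relIndex_dvd_index_of_normal P
  have hP : P.relIndex N * N.index = (P ⊓ N).index := by
    rw [← Subgroup.inf_relIndex_right, Subgroup.relIndex_mul_index inf_le_right]
  have hN : N.relIndex P * P.index = (P ⊓ N).index := by
    rw [← Subgroup.inf_relIndex_left, Subgroup.relIndex_mul_index inf_le_left]
  have hpos : 0 < N.relIndex P := Nat.pos_of_ne_zero Subgroup.index_ne_zero_of_finite
  refine ⟨q, Nat.eq_of_mul_eq_mul_left hpos ?_⟩
  rw [hN, ← hP, hq, mul_left_comm]

lemma exists_mul_mem_normalizer_inf_sylow [Finite G] (P : Sylow r G) (N : Subgroup G) [N.Normal]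
    (g : G) : ∃ k ∈ N, g * k ∈ Subgroup.normalizer ((N ⊓ P : Subgroup G) : Set G) := by
  have hpGroup : IsPGroup r ((P : Subgroup G).subgroupOf N) :=
    P.isPGroup'.comap_of_injective N.subtype N.subtype_injective
  have hindex : ¬ r ∣ ((P : Subgroup G).subgroupOf N).index := fun h =>
    P.not_dvd_index (h.trans (relIndex_dvd_index_of_normal_right _ N))
  have hfrattini := (hpGroup.toSylow hindex).normalizer_sup_eq_top
  rw [IsPGroup.toSylow_coe, Subgroup.subgroupOf_map_subtype, inf_comm] at hfrattini
  obtain ⟨y, hy, k, hk, hyk⟩ :=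
    Subgroup.mem_sup_of_normal_right.mp (hfrattini ▸ Subgroup.mem_top g)
  exact ⟨k⁻¹, N.inv_mem hk, by rwa [← hyk, mul_inv_cancel_right]⟩

lemma exists_finset_normalizer_mem_doubleCoset_sylow [Finite G] (P : Sylow r G)
    {N H : Subgroup G} [N.Normal] (hNH : N ≤ H) :
    ∃ R : Finset G, R.card ≤ ordCompl[r] H.index ∧
      (∀ x ∈ R, x ∈ Subgroup.normalizer ((N ⊓ P : Subgroup G) : Set G)) ∧
      ∀ g : G, ∃ x ∈ R, g ∈ DoubleCoset.doubleCoset x (P : Set G) H := by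
  classical
  have hrep (c : G ⧸ H) : ∃ x : G, (x : G ⧸ H) = c ∧
      x ∈ Subgroup.normalizer ((N ⊓ P : Subgroup G) : Set G) := by
    obtain ⟨g, rfl⟩ := QuotientGroup.mk_surjective c
    obtain ⟨k, hk, hgk⟩ := exists_mul_mem_normalizer_inf_sylow P N g
    exact ⟨g * k, QuotientGroup.mk_mul_of_mem g (hNH hk), hgk⟩
  choose rep hrep_mk hrep_mem using hrep
  have := Fintype.ofFinite (orbitRel.Quotient P (G ⧸ H))
  refine ⟨Finset.univ.image fun ω : orbitRel.Quotient P (G ⧸ H) => rep ω.out, ?_, ?_, fun g => ?_⟩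
  · refine Finset.card_image_le.trans ?_
    rw [Finset.card_univ, ← Nat.card_eq_fintype_card]
    exact card_orbitRel_quotient_sylow_le P
  · exact Finset.forall_mem_image.mpr fun ω _ => hrep_mem _
  · let ω : orbitRel.Quotient P (G ⧸ H) := Quotient.mk'' (g : G ⧸ H)
    obtain ⟨y, hy⟩ : ∃ y : P, y • ω.out = (g : G ⧸ H) :=
      orbitRel_apply.mp (Quotient.exact' ω.out_eq'.symm)
    have hcoset : ((y * rep ω.out : G) : G ⧸ H) = g := by
      rw [← smul_eq_mul, ← MulAction.Quotient.smul_coe, hrep_mk]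
      exact hy
    exact ⟨_, Finset.mem_image_of_mem _ (Finset.mem_univ ω), DoubleCoset.mem_doubleCoset.mpr
      ⟨y, y.2, _, QuotientGroup.eq.mp hcoset, (mul_inv_cancel_left _ g).symm⟩⟩

end Sylow

lemma exists_finset_card_eq_finrank_le_groupSpan {F W : Type*} (Q : Type*) [DivisionRing F]
    [Monoid Q] [AddCommGroup W] [Module F W] [DistribMulAction Q W] (V : Submodule F W)
    [FiniteDimensional F V] :
    ∃ T : Finset W, T.card = finrank F V ∧ V ≤ groupSpan F Q (T : Set W) := by
  have : FiniteDimensional F (Submodule.span F (V : Set W)) := by rwa [Submodule.span_eq]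
  obtain ⟨T, -, hcard, hspan, -⟩ := Submodule.exists_finset_span_eq_linearIndepOn F (V : Set W)
  rw [Submodule.span_eq] at hcard hspan
  exact ⟨T, hcard, hspan ▸ span_le_groupSpan⟩

section NonzeroOrbits

variable {F W : Type*} [Semiring F] [AddCommMonoid W] [Module F W]

/-- The orbits of `Q` on the nonzero elements of `V`. They are recorded as subsets of the ambient
module, so that `V` need not be bundled with its own `Q`-action. -/
def nonzeroOrbits (Q : Type*) [Monoid Q] [DistribMulAction Q W] (V : Submodule F W) :
    Set (Set W) :=
  orbit Q '' {v | v ∈ V ∧ v ≠ 0}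

lemma nonzeroOrbits_subgroup_eq {G : Type*} [Group G] [DistribMulAction G W] (Q : Subgroup G)
    (V : Submodule F W) :
    nonzeroOrbits Q V = {s : Set W | ∃ v ∈ (V : Set W), v ≠ 0 ∧
      s = {w : W | ∃ g ∈ Q, g • v = w}} := by
  have horbit (v : W) : orbit Q v = {w : W | ∃ g ∈ Q, g • v = w} :=
    Set.ext fun w => by simp [mem_orbit_iff, Subgroup.smul_def]
  ext s
  simp only [nonzeroOrbits, horbit, Set.mem_image, Set.mem_ofPred_eq, SetLike.mem_coe, and_assoc,
    eq_comm]

lemma exists_finset_card_eq_ncard_nonzeroOrbits_le_groupSpan {Q : Type*} [Group Q]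
    [DistribMulAction Q W] {V : Submodule F W} (hfin : (nonzeroOrbits Q V).Finite) :
    ∃ T : Finset W, T.card = (nonzeroOrbits Q V).ncard ∧ V ≤ groupSpan F Q (T : Set W) := by
  obtain ⟨T, -, hT⟩ := Set.exists_subset_bijOn {v | v ∈ V ∧ v ≠ 0} (orbit Q)
  have hTfin : T.Finite := hT.finite_iff_finite.mpr hfin
  refine ⟨hTfin.toFinset, ?_, fun v hv => ?_⟩
  · rw [← Set.ncard_eq_toFinset_card T hTfin]
    exact Set.ncard_congr' hT.equiv
  · rw [Set.Finite.coe_toFinset]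
    obtain rfl | hv0 := eq_or_ne v 0
    · exact zero_mem _
    obtain ⟨t, ht, htv⟩ := hT.surjOn (Set.mem_image_of_mem _ ⟨hv, hv0⟩)
    obtain ⟨g, rfl⟩ := orbit_eq_iff.mp htv.symm
    exact smul_mem_groupSpan g ht

end NonzeroOrbits

lemma groupSpan_smul_eq_top_of_doubleCoset {F G W : Type*} [Semiring F] [Group G]
    [AddCommMonoid W] [Module F W] [DistribMulAction G W] [SMulCommClass G F W]
    {H P Q : Subgroup G} {V : Submodule F W}
    (hQP : Q ≤ P) (hV : ∀ h ∈ H, ∀ v ∈ V, h • v ∈ V)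
    (hgen : groupSpan F G (V : Set W) = ⊤) {R : Set G}
    (hR : ∀ x ∈ R, x ∈ Subgroup.normalizer (Q : Set G))
    (hcover : ∀ g : G, ∃ x ∈ R, g ∈ DoubleCoset.doubleCoset x (P : Set G) H)
    {T : Set W} (hT : V ≤ groupSpan F Q T) : groupSpan F P (R • T) = ⊤ := by
  have htranslate : ∀ y ∈ P, ∀ x ∈ R, ∀ v ∈ V, (y * x) • v ∈ groupSpan F P (R • T) := by
    intro y hy x hx v hv
    suffices hle : groupSpan F Q T ≤
        (groupSpan F P (R • T)).comap (DistribSMul.toLinearMap F W (y * x)) from hle (hT hv)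
    refine groupSpan_le.mpr fun q t ht => ?_
    have hconj : x * q * x⁻¹ ∈ P :=
      hQP ((Subgroup.mem_normalizer_iff.mp (hR x hx) q).mp q.2)
    have hsmul : (y * x) • q • t = (⟨y * (x * q * x⁻¹), mul_mem hy hconj⟩ : P) • x • t := by
      simp [Subgroup.smul_def, smul_smul, mul_assoc]
    rw [Submodule.mem_comap, DistribSMul.toLinearMap_apply, hsmul]
    exact smul_mem_groupSpan _ (Set.smul_mem_smul hx ht)
  rw [eq_top_iff, ← hgen, groupSpan_le]
  intro g v hv
  obtain ⟨x, hx, hg⟩ := hcover g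
  obtain ⟨y, hy, h, hh, rfl⟩ := DoubleCoset.mem_doubleCoset.mp hg
  rw [mul_smul]
  exact htranslate y hy x hx _ (hV h hh v hv)

lemma dMod_sylow_le_card_mul_ordCompl {F G W : Type*} [Field F] [Group G] [Finite G]
    [AddCommGroup W] [Module F W] [DistribMulAction G W] [SMulCommClass G F W] {H : Subgroup G}
    {V S : Submodule F W} {r : ℕ} [Fact r.Prime] (hr : (r : F) ≠ 0)
    (P : Sylow r G) {N : Subgroup G} [N.Normal] (hNH : N ≤ H)
    (hV : ∀ h ∈ H, ∀ v ∈ V, h • v ∈ V) (hgen : groupSpan F G (V : Set W) = ⊤)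
    (hS : ∀ g ∈ P, ∀ w ∈ S, g • w ∈ S) {T : Finset W}
    (hT : V ≤ groupSpan F (N ⊓ P : Subgroup G) (T : Set W)) :
    dMod (P : Subgroup G) S ≤ T.card * ordCompl[r] H.index := by
  classical
  obtain ⟨R, hcard, hR, hcover⟩ := exists_finset_normalizer_mem_doubleCoset_sylow P hNH
  have htop : groupSpan F (P : Subgroup G) ((R • T : Finset W) : Set W) = ⊤ := by
    rw [Finset.coe_smul]
    exact groupSpan_smul_eq_top_of_doubleCoset inf_le_right hV hgen hR hcover hT
  have : NeZero (Nat.card (P : Subgroup G) : F) := by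
    rw [P.card_eq_multiplicity, Nat.cast_pow]
    exact ⟨pow_ne_zero _ hr⟩
  calc dMod (P : Subgroup G) S
      ≤ (R • T).card :=
        dMod_le_card_of_groupSpan_eq_top (G := (P : Subgroup G)) (fun g => hS g g.2) htop
    _ ≤ R.card * T.card := Finset.card_smul_le
    _ ≤ T.card * ordCompl[r] H.index := by
      rw [mul_comm]
      exact Nat.mul_le_mul_left _ hcard

theorem stmt_13_general {F G W : Type*} [Field F] [Group G] [Finite G] [AddCommGroup W]
    [Module F W] [DistribMulAction G W] [SMulCommClass G F W] {H : Subgroup G}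
    {V : Submodule F W} [FiniteDimensional F V] (hV : ∀ h ∈ H, ∀ v ∈ V, h • v ∈ V)
    (hgen : groupSpan F G (V : Set W) = ⊤) {r : ℕ} [Fact r.Prime] (hr : (r : F) ≠ 0)
    (P : Sylow r G) {S : Submodule F W} (hS : ∀ g ∈ P, ∀ w ∈ S, g • w ∈ S) :
    ((nonzeroOrbits (H.normalCore ⊓ P : Subgroup G) V).Finite →
      dMod (P : Subgroup G) S ≤ min (finrank F V)
        (nonzeroOrbits (H.normalCore ⊓ P : Subgroup G) V).ncard * ordCompl[r] H.index) ∧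
      dMod (P : Subgroup G) S ≤ finrank F V * ordCompl[r] H.index := by
  have hbound {T : Finset W}
      (hT : V ≤ groupSpan F (H.normalCore ⊓ P : Subgroup G) (T : Set W)) :
      dMod (P : Subgroup G) S ≤ T.card * ordCompl[r] H.index :=
    dMod_sylow_le_card_mul_ordCompl hr P H.normalCore_le hV hgen hS hT
  have hdim : dMod (P : Subgroup G) S ≤ finrank F V * ordCompl[r] H.index := by
    obtain ⟨T, hcard, hT⟩ :=
      exists_finset_card_eq_finrank_le_groupSpan (H.normalCore ⊓ P : Subgroup G) V
    exact hcard ▸ hbound hT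
  refine ⟨fun hfin => ?_, hdim⟩
  obtain ⟨T, hcard, hT⟩ := exists_finset_card_eq_ncard_nonzeroOrbits_le_groupSpan hfin
  rw [min_mul_of_nonneg _ _ (Nat.zero_le _), ← hcard]
  exact le_min hdim (hbound hT)

/-- Let `G` be a finite group, `H ≤ G` of index `n ≥ 2`, `F` a field of characteristic
`p > 0`, and `V` an `H`-module of finite dimension `a` over `F`.  The induced module `V↑G` is
presented internally: `W` is a `G`-module containing an `H`-stable subspace `V` of dimension
`a` such that `W` is the direct sum of the translates `g • V` over the cosets `g H ∈ G ⧸ H`.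
Let `K = core_G H`, let `r ≠ p` be a prime, `P_r` a Sylow `r`-subgroup of `G`, and `χ₁` the
number of orbits of `K ∩ P_r` on the nonzero elements of `V`.  Then for every (`G`-stable)
submodule `S` of `W`, `d_G(S) ≤ min{a,χ₁}·n/n_r`; the bound with `min{a,χ₁}` replaced by `a`
holds without finiteness assumptions on the set of orbits. -/
theorem stmt_13 (G : Type*) [Group G] [Fintype G]
    (H : Subgroup G) (n : ℕ) (hn : 2 ≤ n) (hidx : H.index = n)
    (F W : Type*) [Field F] (p : ℕ) [Fact p.Prime] (hchar : CharP F p)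
    [AddCommGroup W] [Module F W] [DistribMulAction G W] [SMulCommClass G F W]
    (V : Submodule F W) [FiniteDimensional F V] (a : ℕ) (ha : Module.finrank F V = a)
    (hVstable : ∀ g ∈ H, ∀ v ∈ V, g • v ∈ V)
    (hinduced : ∃ φ : G ⧸ H → Submodule F W,
      (∀ g : G, φ (g : G ⧸ H) = V.map (DistribMulAction.toLinearMap F W g)) ∧
        iSupIndep φ ∧ iSup φ = ⊤)
    (r : ℕ) (hr : r.Prime) (hrp : r ≠ p) (Pr : Sylow r G)
    (orbs : Set (Set W))
    (horbs : orbs = {s : Set W | ∃ v ∈ (V : Set W), v ≠ 0 ∧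
      s = {w : W | ∃ g ∈ H.normalCore ⊓ (Pr : Subgroup G), g • v = w}})
    (χ₁ : ℕ) (hχ₁ : χ₁ = Nat.card orbs)
    (S : Submodule F W) (hSstable : ∀ g : G, ∀ w ∈ S, g • w ∈ S) :
    (orbs.Finite → dMod G S ≤ min a χ₁ * (n / r ^ n.factorization r)) ∧
      dMod G S ≤ a * (n / r ^ n.factorization r) := by
  have : Fact r.Prime := ⟨hr⟩
  obtain ⟨φ, hφ, -, hsup⟩ := hinduced
  have hgen := groupSpan_coe_eq_top_of_iSup_cosets_eq_top hφ hsup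
  have hrF : (r : F) ≠ 0 := CharP.cast_ne_zero_of_ne_of_prime F hr hrp.symm
  have := finite_of_groupSpan_eq_top hgen
  have hP := dMod_le_dMod_subgroup (Pr : Subgroup G) hSstable (IsNoetherian.noetherian S)
  have hmain := stmt_13_general hVstable hgen hrF Pr fun g _ => hSstable g
  rw [nonzeroOrbits_subgroup_eq, ← horbs, ← Nat.card_coe_set_eq, ← hχ₁, ha, hidx] at hmain
  exact ⟨fun hfin => hP.trans (hmain.1 hfin), hP.trans hmain.2⟩
end
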